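/- arXiv:1804.09449 — 2 statements merged into one kernel-verified Lean document; each statement's English description precedes it below -/
import Mathlib

section
/- Every finite simple bridgeless cubic graph G admits a normal 7-edge-coloring; that is, χ'_N(G) ≤ 7. -/
open SimpleGraph

/-- A proper edge-coloring: distinct edges of `G` sharing an endpoint get different colors. -/
def IsProperEdgeColoring {V C : Type*} (G : SimpleGraph V) (c : Sym2 V → C) : Prop :=
  ∀ e ∈ G.edgeSet, ∀ f ∈ G.edgeSet, e ≠ f → (∃ v : V, v ∈ e ∧ v ∈ f) → c e ≠ c f

/-- `S_c(v)`: the set of colors appearing on edges incident to `v`. -/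
def colorSet {V C : Type*} (G : SimpleGraph V) (c : Sym2 V → C) (v : V) : Set C :=
  c '' G.incidenceSet v

/-- The edge `uv` is poor: exactly 3 colors appear around its endpoints. -/
def IsPoorAt {V C : Type*} (G : SimpleGraph V) (c : Sym2 V → C) (u v : V) : Prop :=
  (colorSet G c u ∪ colorSet G c v).ncard = 3

/-- The edge `uv` is rich: exactly 5 colors appear around its endpoints. -/
def IsRichAt {V C : Type*} (G : SimpleGraph V) (c : Sym2 V → C) (u v : V) : Prop :=
  (colorSet G c u ∪ colorSet G c v).ncard = 5

/-- A normal edge-coloring: a proper edge-coloring in which every edge is poor or rich. -/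
def IsNormalEdgeColoring {V C : Type*} (G : SimpleGraph V) (c : Sym2 V → C) : Prop :=
  IsProperEdgeColoring G c ∧
    ∀ u v : V, G.Adj u v → IsPoorAt G c u v ∨ IsRichAt G c u v

/-- A nowhere-zero flow with values in an additive group `M` (all elements self-inverse in our
applications): nonzero on every edge, and at every vertex the values on incident edges sum to 0. -/
def IsNowhereZeroFlow {V M : Type*} [AddCommMonoid M] (G : SimpleGraph V)
    (θ : Sym2 V → M) : Prop :=
  (∀ e ∈ G.edgeSet, θ e ≠ 0) ∧ ∀ v : V, ∑ᶠ e ∈ G.incidenceSet v, θ e = 0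

/-- `G` is `k`-edge-connected: connected, and still connected after deleting any set of
fewer than `k` edges. -/
def EdgeConnGe {V : Type*} (G : SimpleGraph V) (k : ℕ) : Prop :=
  G.Connected ∧ ∀ s : Set (Sym2 V), s.ncard < k → (G.deleteEdges s).Connected

/-- `G` is cubic: every vertex has degree 3. -/
def IsCubic {V : Type*} (G : SimpleGraph V) : Prop :=
  ∀ v : V, (G.neighborSet v).ncard = 3

/-- `G` is bridgeless: no edge is a bridge. -/
def Bridgeless {V : Type*} (G : SimpleGraph V) : Prop :=
  ∀ e ∈ G.edgeSet, ¬ G.IsBridge e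

/-!
Let `G` be cubic and `θ` a nowhere-zero flow on `G` with values in `(ZMod 2)³`. The three values at
a vertex are `α, β, α + β` with `α, β` distinct and nonzero, so `θ` is a proper coloring by the
seven nonzero elements. At the ends of an edge of color `α` the colors are `{α, β, α + β}` and
`{α, γ, α + γ}`; these sets either coincide or share only `α`, so `θ` is normal.

Such a flow exists by Jaeger's 8-flow theorem, which holds for bridgeless multigraphs. An edge cut
of size `0` or `2` is removed by identifying two vertices on opposite sides, so assume that all cuts
have size at least `3`. Starting from one vertex, grow a vertex set `U` by repeatedly attaching the
vertex set of a connected even subgraph disjoint from `U` that two edges join to `U`. Undo the steps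
in reverse order, maintaining a `ZMod 2`-flow `φ` and a `(ZMod 2)²`-labelling `ψ`: choose nonzero
`ψ`-values on the two attaching edges so that the `ψ`-values leaving the subgraph have sum zero,
correct the boundary of `ψ` by changing it on the edges of the subgraph only, and add to `φ` the
indicator function of the subgraph, which makes up for any zeros of `ψ` created there.
-/

namespace Multigraph

section Boundary

variable {V E A : Type*} [Fintype E] [DecidableEq V] [AddCommMonoid A]
  {ends : E → Sym2 V} {e : E} {v x y : V}

/-- The boundary of an edge labelling `φ` of the finite multigraph on `V` whose edge `e` has
endpoints `ends e`: the sum of the labels around each vertex, a loop counting twice. There are no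
orientations, so `boundary ends φ = 0` says that `φ` is a flow only over groups of exponent `2`. -/
def boundary (ends : E → Sym2 V) : (E → A) →+ (V → A) where
  toFun φ v := ∑ e, (ends e).toMultiset.count v • φ e
  map_zero' := by ext; simp
  map_add' φ ψ := by ext; simp [Finset.sum_add_distrib]

theorem boundary_apply (φ : E → A) (v : V) :
    boundary ends φ v = ∑ e, (ends e).toMultiset.count v • φ e := rfl

theorem count_toMultiset_mk (x y v : V) :
    s(x, y).toMultiset.count v = (if v = x then 1 else 0) + (if v = y then 1 else 0) := by
  change Multiset.count v {x, y} = _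
  rw [Multiset.insert_eq_cons, Multiset.count_cons, Multiset.count_singleton, add_comm]

theorem boundary_congr {φ ψ : E → A} (h : ∀ e, v ∈ ends e → φ e = ψ e) :
    boundary ends φ v = boundary ends ψ v := by
  refine Finset.sum_congr rfl fun e _ => ?_
  by_cases hv : v ∈ ends e
  · rw [h e hv]
  · rw [Multiset.count_eq_zero_of_notMem (mt Sym2.mem_toMultiset.1 hv), zero_smul, zero_smul]

theorem boundary_single [DecidableEq E] (h : ends e = s(x, y)) (a : A) :
    boundary ends (Pi.single e a) = Pi.single x a + Pi.single y a := by
  ext v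
  rw [boundary_apply, Finset.sum_eq_single e (fun g _ hg => by simp [hg]) (by simp), h,
    count_toMultiset_mk, add_smul]
  simp [Pi.single_apply, ite_smul]

theorem boundary_prodMk {B : Type*} [AddCommMonoid B] (φ : E → A) (ψ : E → B) (v : V) :
    boundary ends (fun e => (φ e, ψ e)) v = (boundary ends φ v, boundary ends ψ v) := by
  ext <;> simp [boundary_apply, Prod.fst_sum, Prod.snd_sum]

theorem boundary_apply_of_loopless (h : ∀ e, ¬ (ends e).IsDiag) (φ : E → A) (v : V) :
    boundary ends φ v = ∑ e with v ∈ ends e, φ e := by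
  rw [boundary_apply, Finset.sum_filter]
  refine Finset.sum_congr rfl fun e _ => ?_
  have hne := h e
  generalize ends e = z at hne ⊢
  induction z with | _ x y =>
  rw [Sym2.mk_isDiag_iff] at hne
  by_cases hx : v = x
  · simp [count_toMultiset_mk, hx, hne]
  · simp [count_toMultiset_mk, hx]

theorem sum_boundary (φ : E → A) (S : Finset V) :
    ∑ v ∈ S, boundary ends φ v = ∑ e, (∑ v ∈ S, (ends e).toMultiset.count v) • φ e := by
  simp only [boundary_apply, Finset.sum_smul]
  exact Finset.sum_comm

theorem boundary_map [Fintype V] {W : Type*} [DecidableEq W] (π : V → W) (φ : E → A) (w : W) :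
    boundary (fun e => (ends e).map π) φ w = ∑ v with π v = w, boundary ends φ v := by
  rw [sum_boundary, boundary_apply]
  refine Finset.sum_congr rfl fun e _ => congrArg (· • φ e) ?_
  induction ends e with | _ x y =>
  simp [count_toMultiset_mk, Finset.sum_add_distrib, Sym2.map_mk, eq_comm]

end Boundary

section Cut

variable {V E : Type*} [Fintype E] [DecidableEq V] {ends : E → Sym2 V} {S T R : Finset V}

/-- The edges with one endpoint in `S` and the other in `T`. In particular
`edgesBetween ends S Sᶜ` is the edge cut of `S`. -/
def edgesBetween (ends : E → Sym2 V) (S T : Finset V) : Finset E :=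
  {e | ∃ x ∈ S, ∃ y ∈ T, ends e = s(x, y)}

theorem mem_edgesBetween {e : E} :
    e ∈ edgesBetween ends S T ↔ ∃ x ∈ S, ∃ y ∈ T, ends e = s(x, y) := by
  simp [edgesBetween]

theorem mem_edgesBetween_iff_of_eq {e : E} {x y : V} (h : ends e = s(x, y)) :
    e ∈ edgesBetween ends S T ↔ x ∈ S ∧ y ∈ T ∨ y ∈ S ∧ x ∈ T := by
  simp only [mem_edgesBetween, h, Sym2.eq_iff]
  aesop

theorem mem_of_mem_edgesBetween_self {e : E} (he : e ∈ edgesBetween ends S S) :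
    ∀ v ∈ ends e, v ∈ S := by
  obtain ⟨x, hx, y, hy, h⟩ := mem_edgesBetween.1 he
  rw [h, Sym2.ball]
  exact ⟨hx, hy⟩

theorem edgesBetween_comm : edgesBetween ends S T = edgesBetween ends T S := by
  ext e
  simp only [mem_edgesBetween]
  constructor <;> exact fun ⟨x, hx, y, hy, h⟩ => ⟨y, hy, x, hx, h.trans Sym2.eq_swap⟩

theorem edgesBetween_mono_right (h : T ⊆ R) : edgesBetween ends S T ⊆ edgesBetween ends S R := by
  intro e he
  obtain ⟨x, hx, y, hy, hxy⟩ := mem_edgesBetween.1 he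
  exact mem_edgesBetween.2 ⟨x, hx, y, h hy, hxy⟩

theorem card_edgesBetween_union_right_le :
    (edgesBetween ends S (T ∪ R)).card ≤
      (edgesBetween ends S T).card + (edgesBetween ends S R).card := by
  classical
  refine (Finset.card_le_card fun e he => ?_).trans (Finset.card_union_le _ _)
  simp only [Finset.mem_union, mem_edgesBetween] at he ⊢
  grind

theorem card_edgesBetween_add_le (hST : Disjoint S T) (hSR : Disjoint S R) :
    (edgesBetween ends S R).card + (edgesBetween ends T R).card ≤
      (edgesBetween ends (S ∪ T) R).card := by
  classical
  rw [← Finset.card_union_of_disjoint]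
  · refine Finset.card_le_card fun e he => ?_
    simp only [Finset.mem_union, mem_edgesBetween] at he ⊢
    grind
  · refine Finset.disjoint_left.2 fun e heS heT => ?_
    obtain ⟨x, hx, y, -, hxy⟩ := mem_edgesBetween.1 heS
    obtain ⟨x', hx', y', hy', hxy'⟩ := mem_edgesBetween.1 heT
    rcases Sym2.eq_iff.1 (hxy.symm.trans hxy') with ⟨rfl, rfl⟩ | ⟨rfl, rfl⟩
    · exact Finset.disjoint_left.1 hST hx hx'
    · exact Finset.disjoint_left.1 hSR hx hy'

theorem sum_boundary_eq_sum_cut [Fintype V] {A : Type*} [AddCommGroup A] [Module (ZMod 2) A]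
    (φ : E → A) (S : Finset V) :
    ∑ v ∈ S, boundary ends φ v = ∑ e ∈ edgesBetween ends S Sᶜ, φ e := by
  classical
  rw [sum_boundary, ← Finset.univ_inter (edgesBetween ends S Sᶜ), ← Finset.sum_ite_mem]
  refine Finset.sum_congr rfl fun e _ => ?_
  obtain ⟨⟨x, y⟩, hxy : s(x, y) = ends e⟩ := Sym2.mk_surjective (ends e)
  rw [← hxy, if_congr (mem_edgesBetween_iff_of_eq hxy.symm) rfl rfl]
  by_cases hx : x ∈ S <;> by_cases hy : y ∈ S <;>
    simp [count_toMultiset_mk, Finset.sum_add_distrib, hx, hy, two_nsmul, ZModModule.add_self]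

end Cut

section Linked

variable {V E : Type*} {ends : E → Sym2 V} {F F₁ F₂ T : Set E} {e : E} {v w x y z : V}

/-- `Linked ends F x y` says that `x` and `y` are joined by a walk all of whose edges are in `F`. -/
def Linked (ends : E → Sym2 V) (F : Set E) : V → V → Prop :=
  Relation.ReflTransGen fun x y => ∃ e ∈ F, ends e = s(x, y)

theorem Linked.single (he : e ∈ F) (h : ends e = s(x, y)) : Linked ends F x y :=
  Relation.ReflTransGen.single ⟨e, he, h⟩

theorem Linked.trans (hxy : Linked ends F x y) (hyz : Linked ends F y z) : Linked ends F x z :=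
  Relation.ReflTransGen.trans hxy hyz

theorem Linked.mono (h : Linked ends F₁ x y) (hF : F₁ ⊆ F₂) : Linked ends F₂ x y :=
  Relation.ReflTransGen.mono (fun _ _ ⟨e, he, hxy⟩ => ⟨e, hF he, hxy⟩) _ _ h

theorem Linked.symm (h : Linked ends F x y) : Linked ends F y x :=
  have : Std.Symm fun x y => ∃ e ∈ F, ends e = s(x, y) :=
    ⟨fun _ _ ⟨e, he, hxy⟩ => ⟨e, he, hxy.trans Sym2.eq_swap⟩⟩
  Std.Symm.symm (r := Relation.ReflTransGen _) _ _ h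

theorem Linked.mem {S : Set V} (h : Linked ends F x y) (hx : x ∈ S)
    (hF : ∀ e ∈ F, ∀ v ∈ ends e, v ∈ S) : y ∈ S := by
  induction h with
  | refl => exact hx
  | tail _ hstep _ =>
    obtain ⟨e, he, hvw⟩ := hstep
    exact hF e he _ (hvw ▸ Sym2.mem_mk_right _ _)

/-- Follow the walk up to its first use of `e`, if there is one. -/
theorem Linked.diff_singleton_or (h : Linked ends F x y) (he : ends e = s(v, w)) :
    Linked ends (F \ {e}) x y ∨ Linked ends (F \ {e}) x v ∨ Linked ends (F \ {e}) x w := by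
  induction h with
  | refl => exact .inl .refl
  | @tail y y' _ hstep ih =>
    refine ih.elim (fun hxy => ?_) .inr
    obtain ⟨g, hg, hgy⟩ := hstep
    by_cases hge : g = e
    · rcases Sym2.eq_iff.1 (hgy.symm.trans (hge ▸ he)) with ⟨rfl, -⟩ | ⟨rfl, -⟩
      · exact .inr (.inl hxy)
      · exact .inr (.inr hxy)
    · exact .inl (hxy.trans (.single ⟨hg, hge⟩ hgy))

/-- `x` and `y` are joined by two edge-disjoint walks with edges in `T`, given by two disjoint
sets of edges that contain them. -/
def DoublyLinked (ends : E → Sym2 V) (T : Set E) (x y : V) : Prop :=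
  ∃ F₁ ⊆ T, ∃ F₂ ⊆ T, Disjoint F₁ F₂ ∧ Linked ends F₁ x y ∧ Linked ends F₂ x y

/-- Walk towards `z`. If `F₂` joins `x` to `v` only through the next edge, then `F₂` reaches both
its ends and takes over the role of `F₁`; otherwise the edge can be given to `F₁`. -/
theorem DoublyLinked.exists_linked (h : DoublyLinked ends T x v) (hz : Linked ends T x z) :
    ∃ F₁ ⊆ T, ∃ F₂ ⊆ T, Disjoint F₁ F₂ ∧ Linked ends F₁ x v ∧ Linked ends F₂ x v ∧
      Linked ends F₁ x z := by
  induction hz with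
  | refl =>
    obtain ⟨F₁, h₁, F₂, h₂, hd, hv₁, hv₂⟩ := h
    exact ⟨F₁, h₁, F₂, h₂, hd, hv₁, hv₂, .refl⟩
  | @tail z z' _ hstep ih =>
    obtain ⟨g, hgT, hg⟩ := hstep
    obtain ⟨F₁, h₁, F₂, h₂, hd, hv₁, hv₂, hz⟩ := ih
    by_cases hneed : Linked ends (F₂ \ {g}) x v
    · refine ⟨insert g F₁, Set.insert_subset hgT h₁, F₂ \ {g}, Set.sdiff_subset.trans h₂, ?_,
        hv₁.mono (Set.subset_insert g F₁), hneed,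
        (hz.mono (Set.subset_insert g F₁)).trans (.single (Set.mem_insert g F₁) hg)⟩
      exact Set.disjoint_insert_left.2 ⟨fun hgF => hgF.2 rfl, hd.mono_right Set.sdiff_subset⟩
    · have hgF : g ∈ F₂ := by
        by_contra hgF
        exact hneed (by rwa [Set.sdiff_singleton_eq_self hgF])
      refine ⟨F₂, h₂, F₁, h₁, hd.symm, hv₂, hv₁, ?_⟩
      rcases hv₂.diff_singleton_or hg with h | h | h
      · exact absurd h hneed
      · exact (h.mono Set.sdiff_subset).trans (.single hgF hg)
      · exact h.mono Set.sdiff_subset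

theorem DoublyLinked.of_step (hT : Linked ends (T \ {e}) v w) (he : e ∈ T)
    (hvw : ends e = s(v, w)) (h : DoublyLinked ends T x v) : DoublyLinked ends T x w := by
  obtain ⟨F₁, h₁, F₂, h₂, hd, hv₁, hv₂⟩ := h
  have handOver : ∀ ⦃F F' : Set E⦄, F ⊆ T → F' ⊆ T → Disjoint F F' → Linked ends (F \ {e}) x w →
      Linked ends F' x v → DoublyLinked ends T x w := fun F F' hF hF' hFF' hw hv =>
    ⟨F \ {e}, Set.sdiff_subset.trans hF, insert e F', Set.insert_subset he hF',
      Set.disjoint_insert_right.2 ⟨fun heF => heF.2 rfl, hFF'.mono_left Set.sdiff_subset⟩, hw,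
      (hv.mono (Set.subset_insert e F')).trans (.single (Set.mem_insert e F') hvw)⟩
  rcases or_self_left.1 <| hv₁.diff_singleton_or hvw with hv₁' | hw₁
  · rcases or_self_left.1 <| hv₂.diff_singleton_or hvw with hv₂' | hw₂
    · have hdouble : DoublyLinked ends (T \ {e}) x v :=
        ⟨F₁ \ {e}, Set.sdiff_subset_sdiff_left h₁, F₂ \ {e}, Set.sdiff_subset_sdiff_left h₂,
          hd.mono Set.sdiff_subset Set.sdiff_subset, hv₁', hv₂'⟩
      have hxw : Linked ends (T \ {e}) x w :=
        (hv₁'.mono (Set.sdiff_subset_sdiff_left h₁)).trans hT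
      obtain ⟨F, hF, F', hF', hFF', -, hv, hw⟩ := hdouble.exists_linked hxw
      have heF : e ∉ F := fun heF => (hF heF).2 rfl
      exact handOver (hF.trans Set.sdiff_subset) (hF'.trans Set.sdiff_subset) hFF'
        (by rwa [Set.sdiff_singleton_eq_self heF]) hv
    · exact handOver h₂ h₁ hd.symm hw₂ hv₁
  · exact handOver h₁ h₂ hd hw₁ hv₂

/-- The case of two edge-disjoint walks of Menger's theorem. -/
theorem Linked.doublyLinked
    (hT : ∀ e ∈ T, ∀ v w, ends e = s(v, w) → Linked ends (T \ {e}) v w)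
    (h : Linked ends T x y) : DoublyLinked ends T x y := by
  induction h with
  | refl => exact ⟨∅, T.empty_subset, ∅, T.empty_subset, disjoint_bot_left, .refl, .refl⟩
  | tail _ hstep ih =>
    obtain ⟨e, he, hvw⟩ := hstep
    exact ih.of_step (hT e he _ _ hvw) he hvw

end Linked

section Flow

open Function

variable {V E A : Type*} [Fintype E] [DecidableEq V] [AddCommGroup A] [Module (ZMod 2) A]
  {ends : E → Sym2 V} {F T : Set E} {x y : V}

theorem Linked.exists_boundary_eq_single_add_single (h : Linked ends F x y) (a : A) :
    ∃ φ : E → A, support φ ⊆ F ∧ boundary ends φ = Pi.single x a + Pi.single y a := by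
  classical
  induction h with
  | refl => exact ⟨0, by simp, by rw [map_zero, ZModModule.add_self]⟩
  | @tail y z _ hstep ih =>
    obtain ⟨e, he, hyz⟩ := hstep
    obtain ⟨φ, hφF, hφ⟩ := ih
    refine ⟨φ + Pi.single e a, (support_add φ _).trans (Set.union_subset hφF ?_), ?_⟩
    · exact Pi.support_single_subset.trans (Set.singleton_subset_iff.2 he)
    · rw [map_add, hφ, boundary_single hyz, ZModModule.add_add_add_cancel]

theorem exists_boundary_eq_of_sum_eq_zero [Fintype V] {b : V → A}
    (hb : ∀ v, b v ≠ 0 → Linked ends F x v) (hsum : ∑ v, b v = 0) :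
    ∃ φ : E → A, support φ ⊆ F ∧ boundary ends φ = b := by
  have hlink : ∀ v, ∃ φ : E → A, support φ ⊆ F ∧
      boundary ends φ = Pi.single x (b v) + Pi.single v (b v) := by
    intro v
    by_cases hv : b v = 0
    · exact ⟨0, by simp, by simp [hv]⟩
    · exact (hb v hv).exists_boundary_eq_single_add_single (b v)
  choose φ hφF hφ using hlink
  refine ⟨∑ v, φ v, fun e he => ?_, ?_⟩
  · rw [Function.mem_support, Finset.sum_apply] at he
    obtain ⟨v, -, hv⟩ := Finset.exists_ne_zero_of_sum_ne_zero he
    exact hφF v hv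
  · have hsingle : ∑ v, Pi.single x (b v) = (0 : V → A) := by
      refine (map_sum (AddMonoidHom.single (fun _ : V => A) x) b _).symm.trans ?_
      rw [hsum, map_zero]
    rw [map_sum, Finset.sum_congr rfl fun v _ => hφ v, Finset.sum_add_distrib,
      Finset.univ_sum_single, hsingle, zero_add]

/-- `χ` is the indicator function of the edge set of a connected subgraph with vertex set `D` all
of whose degrees are even. -/
structure IsConnectedEven (ends : E → Sym2 V) (χ : E → ZMod 2) (D : Finset V) : Prop where
  boundary_eq_zero : boundary ends χ = 0
  mem_of_ne_zero : ∀ e, χ e ≠ 0 → ∀ v ∈ ends e, v ∈ D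
  linked : ∀ v ∈ D, ∀ w ∈ D, Linked ends (support χ) v w

variable [Finite V]

theorem exists_isConnectedEven_component {φ : E → ZMod 2} (hφ : boundary ends φ = 0) (x : V) :
    ∃ χ D, IsConnectedEven ends χ D ∧ (∀ v, v ∈ D ↔ Linked ends (support φ) x v) ∧
      support χ ⊆ support φ := by
  classical
  cases nonempty_fintype V
  let D : Finset V := {v | Linked ends (support φ) x v}
  let meetsD : Set E := {e | ∃ v ∈ D, v ∈ ends e}
  have mem_D (v : V) : v ∈ D ↔ Linked ends (support φ) x v := by simp [D]
  have mem_D_of_meetsD : ∀ e ∈ meetsD, φ e ≠ 0 → ∀ w ∈ ends e, w ∈ D := by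
    rintro e ⟨v, hv, hve⟩ he w hwe
    rw [mem_D] at hv ⊢
    obtain rfl | hvw := eq_or_ne v w
    · exact hv
    · exact hv.trans (.single he ((Sym2.mem_and_mem_iff hvw).1 ⟨hve, hwe⟩))
  have linked_x : ∀ v ∈ D, Linked ends (support (meetsD.indicator φ)) x v := by
    intro v hv
    rw [mem_D] at hv
    induction hv with
    | refl => exact .refl
    | @tail y z hxy hstep ih =>
      obtain ⟨e, he, hyz⟩ := hstep
      refine ih.trans (.single (e := e) ?_ hyz)
      rw [Set.support_indicator]
      exact ⟨⟨y, (mem_D y).2 hxy, hyz ▸ Sym2.mem_mk_left y z⟩, he⟩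
  refine ⟨meetsD.indicator φ, D, ⟨funext fun v => ?_, fun e he => ?_, fun v hv w hw => ?_⟩, mem_D,
    (Set.support_indicator ..).trans_subset Set.inter_subset_right⟩
  · by_cases hv : v ∈ D
    · rw [boundary_congr (ψ := φ) fun e he => Set.indicator_of_mem (s := meetsD) ⟨v, hv, he⟩ φ, hφ]
    · refine (boundary_congr (ψ := 0) fun e he => ?_).trans (by rw [map_zero])
      by_contra hne
      rw [← ne_eq, Pi.zero_apply, Set.indicator_apply_ne_zero] at hne
      exact hv (mem_D_of_meetsD e hne.1 hne.2 v he)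
  · rw [Set.indicator_apply_ne_zero] at he
    exact mem_D_of_meetsD e he.1 he.2
  · exact (linked_x v hv).symm.trans (linked_x w hw)

/-- The component of `x` in the even subgraph `φ + ψ`, where the disjoint sets `support φ` and
`support ψ` join `x` to `y`, also contains `y`: otherwise no edge of `φ` leaves the component,
in which `x` is then the only vertex of odd degree of `φ`. -/
theorem DoublyLinked.exists_isConnectedEven (h : DoublyLinked ends T x y) :
    ∃ χ D, IsConnectedEven ends χ D ∧ support χ ⊆ T ∧ x ∈ D ∧ y ∈ D := by
  cases nonempty_fintype V
  obtain ⟨F₁, hF₁, F₂, hF₂, hdisj, h₁, h₂⟩ := h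
  obtain ⟨φ, hφF, hφ⟩ := h₁.exists_boundary_eq_single_add_single (1 : ZMod 2)
  obtain ⟨ψ, hψF, hψ⟩ := h₂.exists_boundary_eq_single_add_single (1 : ZMod 2)
  obtain ⟨χ, D, hχ, mem_D, hχφψ⟩ := exists_isConnectedEven_component
    (show boundary ends (φ + ψ) = 0 by rw [map_add, hφ, hψ, ZModModule.add_self]) x
  have hx : x ∈ D := (mem_D x).2 .refl
  refine ⟨χ, D, hχ, hχφψ.trans <| (support_add φ ψ).trans <|
    Set.union_subset (hφF.trans hF₁) (hψF.trans hF₂), hx, ?_⟩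
  have hcut : ∀ e ∈ edgesBetween ends D Dᶜ, φ e = 0 := by
    intro e he
    obtain ⟨v, hv, w, hw, hvw⟩ := mem_edgesBetween.1 he
    by_contra hφe
    have hψe : ψ e = 0 := by
      by_contra hψe
      exact Set.disjoint_left.1 hdisj (hφF hφe) (hψF hψe)
    rw [Finset.mem_compl, mem_D] at hw
    refine hw (((mem_D v).1 hv).trans (.single (e := e) ?_ hvw))
    rwa [Function.mem_support, Pi.add_apply, hψe, add_zero]
  have hsum := sum_boundary_eq_sum_cut (ends := ends) φ D
  rw [Finset.sum_eq_zero hcut, hφ] at hsum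
  by_contra hy
  simp [Finset.sum_add_distrib, hx, hy] at hsum

end Flow

section TwoEdgeConnected

variable {V E : Type*} [Fintype E] [DecidableEq V] {ends : E → Sym2 V} {S R : Finset V} {x y : V}

/-- The subgraph induced by `S` is connected and has no bridge, expressed by its edge cuts.
The set `S` may be empty. -/
def IsTwoEdgeConnected (ends : E → Sym2 V) (S : Finset V) : Prop :=
  ∀ A ⊆ S, A.Nonempty → A ≠ S → 2 ≤ (edgesBetween ends A (S \ A)).card

/-- Take a minimal nonempty `S ⊆ R` that at most one edge joins to the rest of `R`. -/
theorem exists_isTwoEdgeConnected_subset (ends : E → Sym2 V) (hR : R.Nonempty) :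
    ∃ S ⊆ R, S.Nonempty ∧ IsTwoEdgeConnected ends S ∧
      (edgesBetween ends S (R \ S)).card ≤ 1 := by
  let weak : Set (Finset V) :=
    {S | S ⊆ R ∧ S.Nonempty ∧ (edgesBetween ends S (R \ S)).card ≤ 1}
  have hRweak : R ∈ weak := ⟨subset_rfl, hR, by simp [edgesBetween]⟩
  obtain ⟨S, ⟨hSR, hS, hS1⟩, hmin⟩ := wellFounded_lt.has_min weak ⟨R, hRweak⟩
  refine ⟨S, hSR, hS, fun A hA hAne hAS => ?_, hS1⟩
  have two_le_of_ssubset : ∀ B ⊂ S, B.Nonempty →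
      2 ≤ (edgesBetween ends B (S \ B)).card + (edgesBetween ends B (R \ S)).card := by
    intro B hB hBne
    have hnot : ¬ (edgesBetween ends B (R \ B)).card ≤ 1 :=
      fun h => hmin B ⟨hB.subset.trans hSR, hBne, h⟩ hB
    rw [← Finset.sdiff_union_sdiff_cancel hSR hB.subset, Finset.union_comm] at hnot
    exact (not_le.1 hnot).trans_le card_edgesBetween_union_right_le
  have hAsub := Finset.ssubset_iff_subset_ne.2 ⟨hA, hAS⟩
  have hfromA := two_le_of_ssubset A hAsub hAne
  have hfromB := two_le_of_ssubset (S \ A) (Finset.sdiff_ssubset hA hAne)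
    (Finset.sdiff_nonempty.2 hAsub.not_subset)
  rw [Finset.sdiff_sdiff_eq_self hA, edgesBetween_comm] at hfromB
  have hdisj : Disjoint A (R \ S) := Finset.disjoint_sdiff.mono_left hA
  have hsplit := card_edgesBetween_add_le (ends := ends) (T := S \ A) Finset.disjoint_sdiff hdisj
  rw [Finset.union_sdiff_of_subset hA] at hsplit
  lia

theorem IsTwoEdgeConnected.linked (hS : IsTwoEdgeConnected ends S) {F : Finset E}
    (hF : F.card ≤ 1) (hx : x ∈ S) (hy : y ∈ S) :
    Linked ends (edgesBetween ends S S \ F) x y := by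
  classical
  let A : Finset V := {v ∈ S | Linked ends (edgesBetween ends S S \ F) x v}
  have hxA : x ∈ A := Finset.mem_filter.2 ⟨hx, .refl⟩
  have hcut : edgesBetween ends A (S \ A) ⊆ F := by
    intro e he
    obtain ⟨v, hv, w, hw, hvw⟩ := mem_edgesBetween.1 he
    by_contra heF
    obtain ⟨hvS, hxv⟩ := Finset.mem_filter.1 hv
    obtain ⟨hwS, hwA⟩ := Finset.mem_sdiff.1 hw
    exact hwA <| Finset.mem_filter.2 ⟨hwS, hxv.trans <|
      .single ⟨mem_edgesBetween.2 ⟨v, hvS, w, hwS, hvw⟩, heF⟩ hvw⟩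
  have hAS : A = S := by
    by_contra hne
    have htwo := hS A (Finset.filter_subset _ _) ⟨x, hxA⟩ hne
    have hone := (Finset.card_le_card hcut).trans hF
    lia
  exact (Finset.mem_filter.1 (hAS.symm ▸ hy)).2

theorem IsTwoEdgeConnected.doublyLinked (hS : IsTwoEdgeConnected ends S) (hx : x ∈ S)
    (hy : y ∈ S) : DoublyLinked ends (edgesBetween ends S S) x y := by
  refine Linked.doublyLinked (fun e he v w hvw => ?_) ?_
  · have hv := mem_of_mem_edgesBetween_self he v (hvw ▸ Sym2.mem_mk_left v w)
    have hw := mem_of_mem_edgesBetween_self he w (hvw ▸ Sym2.mem_mk_right v w)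
    simpa using hS.linked (F := {e}) (by simp) hv hw
  · simpa using hS.linked (F := ∅) (by simp) hx hy

theorem exists_isConnectedEven_of_three_le_card_cut [Fintype V] {U : Finset V}
    (hcut : ∀ S : Finset V, S.Nonempty → S ≠ Finset.univ → 3 ≤ (edgesBetween ends S Sᶜ).card)
    (hU : U.Nonempty) (hU' : U ≠ Finset.univ) :
    ∃ χ D, IsConnectedEven ends χ D ∧ Disjoint D U ∧
      ∃ e ∈ edgesBetween ends D U, ∃ f ∈ edgesBetween ends D U, e ≠ f := by
  obtain ⟨S, hSU, hSne, hS, hS1⟩ := exists_isTwoEdgeConnected_subset ends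
    (Finset.nonempty_iff_ne_empty.2 ((Finset.compl_eq_empty_iff U).not.2 hU'))
  have hdisj : Disjoint S U := Finset.subset_compl_iff_disjoint_right.1 hSU
  have htwo : 1 < (edgesBetween ends S U).card := by
    have hSuniv : S ≠ Finset.univ := by
      rintro rfl
      exact hU.ne_empty (top_disjoint.1 hdisj)
    have hcompl : Sᶜ = U ∪ (Uᶜ \ S) := by
      ext v
      have hv : v ∈ S → v ∉ U := fun h => Finset.disjoint_left.1 hdisj h
      simp only [Finset.mem_compl, Finset.mem_union, Finset.mem_sdiff]
      tauto
    have hthree := (hcompl ▸ hcut S hSne hSuniv).trans card_edgesBetween_union_right_le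
    lia
  obtain ⟨e, he, f, hf, hef⟩ := Finset.one_lt_card.1 htwo
  obtain ⟨x, hx, u, hu, hxu⟩ := mem_edgesBetween.1 he
  obtain ⟨y, hy, w, hw, hyw⟩ := mem_edgesBetween.1 hf
  obtain ⟨χ, D, hχ, hχS, hxD, hyD⟩ := (hS.doublyLinked hx hy).exists_isConnectedEven
  have hDS : D ⊆ S := fun v hv =>
    ((hχ.linked x hxD v hv).mono hχS).mem hx fun e he => mem_of_mem_edgesBetween_self he
  exact ⟨χ, D, hχ, hdisj.mono_left hDS, e, mem_edgesBetween.2 ⟨x, hxD, u, hu, hxu⟩, f,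
    mem_edgesBetween.2 ⟨y, hyD, w, hw, hyw⟩, hef⟩

end TwoEdgeConnected

section PartialFlow

open Function

theorem exists_sum_eq_zero_of_modify_pair {E : Type*} (ψ : E → ZMod 2 × ZMod 2) {s : Finset E}
    {e f : E} (he : e ∈ s) (hf : f ∈ s) (hef : e ≠ f) :
    ∃ ψ' : E → ZMod 2 × ZMod 2, (∀ g, g ≠ e → g ≠ f → ψ' g = ψ g) ∧ ψ' e ≠ 0 ∧ ψ' f ≠ 0 ∧
      ∑ g ∈ s, ψ' g = 0 := by
  classical
  have hKlein : ∀ c : ZMod 2 × ZMod 2, ∃ p ≠ 0, ∃ q ≠ 0, p + (q + c) = 0 := by decide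
  obtain ⟨p, hp, q, hq, hpq⟩ := hKlein (∑ g ∈ (s.erase e).erase f, ψ g)
  have hf' : f ∈ s.erase e := Finset.mem_erase.2 ⟨hef.symm, hf⟩
  let ψ' := update (update ψ e p) f q
  have hψ' : ∀ g, g ≠ e → g ≠ f → ψ' g = ψ g := fun g hge hgf => by simp [ψ', hge, hgf]
  have hψ'e : ψ' e = p := by simp [ψ', hef]
  have hψ'f : ψ' f = q := by simp [ψ']
  refine ⟨ψ', hψ', hψ'e ▸ hp, hψ'f ▸ hq, ?_⟩
  rw [← Finset.add_sum_erase s _ he, ← Finset.add_sum_erase _ _ hf', hψ'e, hψ'f, ← hpq]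
  refine congrArg (fun c => p + (q + c)) (Finset.sum_congr rfl fun g hg => ?_)
  simp only [Finset.mem_erase] at hg
  exact hψ' g hg.2.1 hg.1

variable {V E A : Type*} [Fintype E] [DecidableEq V] [AddCommGroup A] [Module (ZMod 2) A]
  {ends : E → Sym2 V} {U D : Finset V} {χ φ : E → ZMod 2} {ψ : E → ZMod 2 × ZMod 2}

theorem IsConnectedEven.exists_boundary_eq [Fintype V] (hχ : IsConnectedEven ends χ D)
    {ψ : E → A} (hψ : ∑ e ∈ edgesBetween ends D Dᶜ, ψ e = 0) :
    ∃ ζ : E → A, support ζ ⊆ support χ ∧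
      ∀ v, boundary ends ζ v = if v ∈ D then boundary ends ψ v else 0 := by
  obtain rfl | ⟨x, hx⟩ := D.eq_empty_or_nonempty
  · exact ⟨0, by simp, by simp⟩
  obtain ⟨ζ, hζχ, hζ⟩ := exists_boundary_eq_of_sum_eq_zero (ends := ends) (F := support χ) (x := x)
    (b := fun v => if v ∈ D then boundary ends ψ v else 0)
    (fun v hv => hχ.linked x hx v (ite_ne_right_iff.1 hv).1)
    (by rw [Finset.sum_ite_mem, Finset.univ_inter, sum_boundary_eq_sum_cut, hψ])
  exact ⟨ζ, hζχ, fun v => congrFun hζ v⟩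

/-- A stage of the construction of a nowhere-zero flow `(φ, ψ)` in `(ZMod 2)³`: the vertices
outside `U` have been dealt with, and `φ` is still zero on all edges that meet `U`. -/
structure IsPartialFlow (ends : E → Sym2 V) (U : Finset V) (φ : E → ZMod 2)
    (ψ : E → ZMod 2 × ZMod 2) : Prop where
  boundary_fst_eq_zero : ∀ v ∉ U, boundary ends φ v = 0
  boundary_snd_eq_zero : ∀ v ∉ U, boundary ends ψ v = 0
  fst_eq_zero : ∀ v ∈ U, ∀ e, v ∈ ends e → φ e = 0
  snd_ne_zero : ∀ e, φ e = 0 → ψ e ≠ 0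

theorem IsPartialFlow.boundary_fst (h : IsPartialFlow ends U φ ψ) : boundary ends φ = 0 := by
  ext v
  by_cases hv : v ∈ U
  · rw [boundary_congr (ψ := 0) fun e he => h.fst_eq_zero v hv e he, map_zero]
  · exact h.boundary_fst_eq_zero v hv

theorem IsPartialFlow.exists_sum_cut_eq_zero [Fintype V] (h : IsPartialFlow ends (U ∪ D) φ ψ)
    (hDU : Disjoint D U) {e f : E}
    (he : e ∈ edgesBetween ends D U) (hf : f ∈ edgesBetween ends D U) (hef : e ≠ f) :
    ∃ ψ', IsPartialFlow ends (U ∪ D) φ ψ' ∧ ∑ g ∈ edgesBetween ends D Dᶜ, ψ' g = 0 := by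
  have hcut : edgesBetween ends D U ⊆ edgesBetween ends D Dᶜ :=
    edgesBetween_mono_right (Finset.subset_compl_iff_disjoint_left.2 hDU)
  obtain ⟨ψ', hψ', hψ'e, hψ'f, hsum⟩ :=
    exists_sum_eq_zero_of_modify_pair ψ (hcut he) (hcut hf) hef
  have hmem : ∀ g ∈ edgesBetween ends D U, ∀ v ∈ ends g, v ∈ U ∪ D := by
    intro g hg v hv
    obtain ⟨x, hx, y, hy, hxy⟩ := mem_edgesBetween.1 hg
    rcases Sym2.mem_iff.1 (hxy ▸ hv) with rfl | rfl
    exacts [Finset.mem_union_right U hx, Finset.mem_union_left D hy]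
  refine ⟨ψ', ⟨h.boundary_fst_eq_zero, fun v hv => ?_, h.fst_eq_zero, fun g hg => ?_⟩, hsum⟩
  · rw [← h.boundary_snd_eq_zero v hv]
    refine boundary_congr fun g hg => hψ' g ?_ ?_
    · rintro rfl
      exact hv (hmem g he v hg)
    · rintro rfl
      exact hv (hmem g hf v hg)
  · by_cases hge : g = e
    · rwa [hge]
    by_cases hgf : g = f
    · rwa [hgf]
    rw [hψ' g hge hgf]
    exact h.snd_ne_zero g hg

theorem IsPartialFlow.exists_of_union [Fintype V] (h : IsPartialFlow ends (U ∪ D) φ ψ)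
    (hχ : IsConnectedEven ends χ D) (hDU : Disjoint D U)
    (hψ : ∑ g ∈ edgesBetween ends D Dᶜ, ψ g = 0) :
    ∃ ζ, IsPartialFlow ends U (φ + χ) (ψ + ζ) := by
  obtain ⟨ζ, hζχ, hζ⟩ := hχ.exists_boundary_eq hψ
  refine ⟨ζ, fun v _ => ?_, fun v hv => ?_, fun v hv e he => ?_, fun e he => ?_⟩
  · rw [map_add, h.boundary_fst, hχ.boundary_eq_zero, add_zero, Pi.zero_apply]
  · rw [map_add, Pi.add_apply, hζ]
    split_ifs with hvD
    · exact ZModModule.add_self _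
    · rw [h.boundary_snd_eq_zero v (by simp [hv, hvD]), add_zero]
  · have hχe : χ e = 0 := by
      by_contra hne
      exact Finset.disjoint_right.1 hDU hv (hχ.mem_of_ne_zero e hne v he)
    rw [Pi.add_apply, h.fst_eq_zero v (Finset.mem_union_left D hv) e he, hχe, add_zero]
  · have hχe : χ e = 0 := by
      by_contra hne
      have hφe : φ e = 0 := h.fst_eq_zero _ (Finset.mem_union_right U
        (hχ.mem_of_ne_zero e hne _ (ends e).out_fst_mem)) e (ends e).out_fst_mem
      exact hne (by simpa [hφe] using he)
    have hζe : ζ e = 0 := by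
      by_contra hne
      exact hζχ hne hχe
    rw [Pi.add_apply, hζe, add_zero]
    exact h.snd_ne_zero e (by simpa [hχe] using he)

theorem exists_isPartialFlow_of_three_le_card_cut [Fintype V]
    (hcut : ∀ S : Finset V, S.Nonempty → S ≠ Finset.univ → 3 ≤ (edgesBetween ends S Sᶜ).card)
    (hU : U.Nonempty) : ∃ φ ψ, IsPartialFlow ends U φ ψ := by
  induction U using WellFoundedGT.induction with | ind U ih =>
  obtain rfl | hU' := eq_or_ne U Finset.univ
  · exact ⟨0, fun _ => (1, 1), by simp, by simp, by simp, by simp⟩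
  obtain ⟨χ, D, hχ, hDU, e, he, f, hf, hef⟩ :=
    exists_isConnectedEven_of_three_le_card_cut hcut hU hU'
  have hlt : U < U ∪ D := by
    obtain ⟨x, hx, -⟩ := mem_edgesBetween.1 he
    refine Finset.ssubset_iff_subset_ne.2 ⟨Finset.subset_union_left, fun h => ?_⟩
    exact Finset.disjoint_left.1 hDU hx (h ▸ Finset.mem_union_right U hx)
  obtain ⟨φ, ψ, h⟩ := ih (U ∪ D) hlt (hU.mono Finset.subset_union_left)
  obtain ⟨ψ', h', hψ'⟩ := h.exists_sum_cut_eq_zero hDU he hf hef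
  obtain ⟨ζ, hζ⟩ := h'.exists_of_union hχ hDU hψ'
  exact ⟨_, _, hζ⟩

/-- The multigraph has a nowhere-zero flow with values in `A`. As `boundary` ignores orientations,
this is the usual notion only if `A` has exponent `2`. -/
def HasNowhereZeroFlow (A : Type*) [AddCommMonoid A] (ends : E → Sym2 V) : Prop :=
  ∃ φ : E → A, (∀ e, φ e ≠ 0) ∧ boundary ends φ = 0

theorem hasNowhereZeroFlow_of_three_le_card_cut [Fintype V] [Nonempty V]
    (hcut : ∀ S : Finset V, S.Nonempty → S ≠ Finset.univ → 3 ≤ (edgesBetween ends S Sᶜ).card) :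
    HasNowhereZeroFlow (ZMod 2 × ZMod 2 × ZMod 2) ends := by
  obtain ⟨u⟩ := ‹Nonempty V›
  obtain ⟨φ, ψ, h⟩ := exists_isPartialFlow_of_three_le_card_cut hcut (Finset.singleton_nonempty u)
  have hψ : ∀ v ≠ u, boundary ends ψ v = 0 := fun v hv =>
    h.boundary_snd_eq_zero v (by simpa using hv)
  have hψu : boundary ends ψ u = 0 := by
    have hsum := sum_boundary_eq_sum_cut (ends := ends) ψ Finset.univ
    rw [Finset.sum_eq_single u (fun v _ => hψ v) (by simp)] at hsum
    simpa [edgesBetween] using hsum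
  refine ⟨fun e => (φ e, ψ e), fun e he => ?_, funext fun v => ?_⟩
  · obtain ⟨hφ, hψ⟩ := Prod.mk_eq_zero.1 he
    exact h.snd_ne_zero e hφ hψ
  · rw [boundary_prodMk, h.boundary_fst]
    obtain rfl | hv := eq_or_ne v u
    · rw [hψu]; rfl
    · rw [hψ v hv]; rfl

end PartialFlow

section Contraction

open Function

variable {V E A : Type*} [DecidableEq V] [AddCommGroup A] [Module (ZMod 2) A] {ends : E → Sym2 V}
  {u v : V}

/-- The quotient map that identifies `v` with `u`, with quotient represented by `V \ {v}`. -/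
def identify (h : u ≠ v) (w : V) : {w : V // w ≠ v} :=
  if hw : w = v then ⟨u, h⟩ else ⟨w, hw⟩

theorem identify_eq_iff (h : u ≠ v) (w : V) (x : {w : V // w ≠ v}) :
    identify h w = x ↔ w = x ∨ w = v ∧ x = u := by
  unfold identify
  grind

variable [Fintype E]

theorem edgesBetween_map_compl [Fintype V] {W : Type*} [Fintype W] [DecidableEq W] (π : V → W)
    (S : Finset W) :
    edgesBetween (fun e => (ends e).map π) S Sᶜ =
      edgesBetween ends {v | π v ∈ S} ({v | π v ∈ S} : Finset V)ᶜ := by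
  ext e
  obtain ⟨⟨x, y⟩, hxy : s(x, y) = ends e⟩ := Sym2.mk_surjective (ends e)
  have hπ : (ends e).map π = s(π x, π y) := by rw [← hxy, Sym2.map_mk]
  rw [mem_edgesBetween_iff_of_eq hxy.symm,
    mem_edgesBetween_iff_of_eq (ends := fun e => (ends e).map π) hπ]
  simp

theorem exists_boundary_eq_of_boundary_identify [Finite V] (h : u ≠ v) {φ : E → A}
    (hφ : boundary (fun e => (ends e).map (identify h)) φ = 0) :
    ∃ c, boundary ends φ = Pi.single u c + Pi.single v c := by
  cases nonempty_fintype V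
  have hfiber (x : {w : V // w ≠ v}) :
      ∑ w : V with w = ↑x ∨ w = v ∧ ↑x = u, boundary ends φ w = 0 := by
    simpa only [boundary_map, identify_eq_iff, Pi.zero_apply] using congrFun hφ x
  have huv : boundary ends φ u = boundary ends φ v := by
    rw [← sub_eq_zero, ZModModule.sub_eq_add, ← Finset.sum_pair h, ← hfiber ⟨u, h⟩]
    exact Finset.sum_congr (by ext; simp) fun _ _ => rfl
  refine ⟨boundary ends φ u, funext fun w => ?_⟩
  obtain rfl | hwv := eq_or_ne w v
  · simpa [h.symm] using huv.symm
  obtain rfl | hwu := eq_or_ne w u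
  · simp [h]
  · simpa [hwu, hwv, Finset.filter_eq'] using hfiber ⟨w, hwv⟩

variable [Fintype V]

theorem hasNowhereZeroFlow_of_identify_of_cut_eq_empty {S : Finset V} (hu : u ∈ S) (hv : v ∉ S)
    (h : u ≠ v) (hS : edgesBetween ends S Sᶜ = ∅)
    (hflow : HasNowhereZeroFlow A fun e => (ends e).map (identify h)) :
    HasNowhereZeroFlow A ends := by
  obtain ⟨φ, hφ0, hφ⟩ := hflow
  obtain ⟨c, hc⟩ := exists_boundary_eq_of_boundary_identify h hφ
  have hsum := sum_boundary_eq_sum_cut (ends := ends) φ S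
  have hc0 : c = 0 := by
    simpa [hc, hS, Finset.sum_add_distrib, hu, hv] using hsum
  exact ⟨φ, hφ0, by simp [hc, hc0]⟩

theorem hasNowhereZeroFlow_of_identify_of_cut_eq_pair [DecidableEq E] {S : Finset V} (hu : u ∈ S)
    (hv : v ∉ S) (h : u ≠ v) {e f : E} (hef : e ≠ f) (hS : edgesBetween ends S Sᶜ = {e, f})
    (he : ends e = s(u, v))
    (hflow : HasNowhereZeroFlow A fun e => (ends e).map (identify h)) :
    HasNowhereZeroFlow A ends := by
  obtain ⟨φ, hφ0, hφ⟩ := hflow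
  obtain ⟨c, hc⟩ := exists_boundary_eq_of_boundary_identify h hφ
  have hsum := sum_boundary_eq_sum_cut (ends := ends) φ S
  have hcef : c = φ e + φ f := by
    simpa [hc, hS, Finset.sum_add_distrib, Finset.sum_pair hef, hu, hv] using hsum
  refine ⟨φ + Pi.single e c, fun g => ?_, ?_⟩
  · obtain rfl | hg := eq_or_ne g e
    · simpa [hcef, ← add_assoc, ZModModule.add_self] using hφ0 f
    · simpa [hg] using hφ0 g
  · rw [map_add, hc, boundary_single he, ZModModule.add_self]

/-- Jaeger's 8-flow theorem. -/
theorem hasNowhereZeroFlow_of_card_cut_ne_one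
    (hcut : ∀ S : Finset V, (edgesBetween ends S Sᶜ).card ≠ 1) :
    HasNowhereZeroFlow (ZMod 2 × ZMod 2 × ZMod 2) ends := by
  classical
  induction hn : Fintype.card V using Nat.strong_induction_on generalizing V with | _ n ih =>
  subst hn
  have hidentify {u v : V} (h : u ≠ v) : HasNowhereZeroFlow (ZMod 2 × ZMod 2 × ZMod 2)
      fun e => (ends e).map (identify h) :=
    ih _ (Fintype.card_subtype_lt (x := v) (by simp))
      (fun S => by rw [edgesBetween_map_compl]; exact hcut _) rfl
  cases isEmpty_or_nonempty V
  · exact ⟨fun _ => 1, by simp, Subsingleton.elim _ _⟩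
  by_cases h3 : ∀ S : Finset V, S.Nonempty → S ≠ Finset.univ → 3 ≤ (edgesBetween ends S Sᶜ).card
  · exact hasNowhereZeroFlow_of_three_le_card_cut h3
  push Not at h3
  obtain ⟨S, ⟨u, hu⟩, hSuniv, hS⟩ := h3
  obtain hzero | htwo :
      (edgesBetween ends S Sᶜ).card = 0 ∨ (edgesBetween ends S Sᶜ).card = 2 := by
    have hone := hcut S
    lia
  · obtain ⟨v, hv⟩ : ∃ v, v ∉ S := by simpa [Finset.eq_univ_iff_forall] using hSuniv
    have huv : u ≠ v := ne_of_mem_of_not_mem hu hv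
    exact hasNowhereZeroFlow_of_identify_of_cut_eq_empty hu hv huv (Finset.card_eq_zero.1 hzero)
      (hidentify huv)
  · obtain ⟨e, f, hef, hS⟩ := Finset.card_eq_two.1 htwo
    obtain ⟨u, hu, v, hv, he⟩ := mem_edgesBetween.1 (hS ▸ Finset.mem_insert_self e {f})
    rw [Finset.mem_compl] at hv
    have huv : u ≠ v := ne_of_mem_of_not_mem hu hv
    exact hasNowhereZeroFlow_of_identify_of_cut_eq_pair hu hv huv hef hS he (hidentify huv)

end Contraction

end Multigraph

section SimpleGraph

open Multigraph

variable {V : Type*} {G : SimpleGraph V}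

theorem Bridgeless.card_cut_ne_one [Fintype V] [DecidableEq V] [Fintype G.edgeSet]
    (hG : Bridgeless G) (S : Finset V) :
    (edgesBetween (Subtype.val : G.edgeSet → Sym2 V) S Sᶜ).card ≠ 1 := by
  intro hcard
  obtain ⟨e, he⟩ := Finset.card_eq_one.1 hcard
  obtain ⟨u, hu, v, hv, huv⟩ := mem_edgesBetween.1 (he ▸ Finset.mem_singleton_self e)
  have hreach := hG e e.2
  rw [huv, SimpleGraph.isBridge_iff, not_not] at hreach
  obtain ⟨p⟩ := hreach
  obtain ⟨d, -, hfst, hsnd⟩ := p.exists_boundary_dart S hu (Finset.mem_compl.1 hv)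
  obtain ⟨hadj, hne⟩ := SimpleGraph.deleteEdges_adj.1 d.adj
  have hd : (⟨s(d.fst, d.snd), hadj⟩ : G.edgeSet) ∈ edgesBetween Subtype.val S Sᶜ :=
    mem_edgesBetween.2 ⟨d.fst, hfst, d.snd, Finset.mem_compl.2 hsnd, rfl⟩
  rw [he, Finset.mem_singleton, Subtype.ext_iff] at hd
  exact hne (Set.mem_singleton_iff.2 (hd.trans huv))

theorem Bridgeless.exists_isNowhereZeroFlow [Finite V] (hG : Bridgeless G) :
    ∃ θ : Sym2 V → ZMod 2 × ZMod 2 × ZMod 2, IsNowhereZeroFlow G θ := by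
  classical
  cases nonempty_fintype V
  obtain ⟨φ, hφ0, hφ⟩ := hasNowhereZeroFlow_of_card_cut_ne_one hG.card_cut_ne_one
  have hθ (e : G.edgeSet) : Function.extend Subtype.val φ 0 e = φ e :=
    Subtype.val_injective.extend_apply φ 0 e
  refine ⟨Function.extend Subtype.val φ 0, fun e he => (hθ ⟨e, he⟩).trans_ne (hφ0 _),
    fun v => ?_⟩
  let star : Finset G.edgeSet := {e | v ∈ e.1}
  have hstar : G.incidenceSet v = Subtype.val '' (star : Set G.edgeSet) := by
    ext e
    simp [star, SimpleGraph.incidenceSet, and_comm]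
  rw [hstar, finsum_mem_image Subtype.val_injective.injOn, finsum_mem_coe_finset,
    Finset.sum_congr rfl fun e _ => hθ e,
    ← boundary_apply_of_loopless (fun e => G.not_isDiag_of_mem_edgeSet e.2), hφ, Pi.zero_apply]

variable {M : Type*} [AddCommGroup M] [Module (ZMod 2) M] {θ : Sym2 V → M} {u v : V}

theorem incidenceSet_eq_image_neighborSet (v : V) :
    G.incidenceSet v = (s(v, ·)) '' G.neighborSet v := by
  ext e
  constructor
  · rintro ⟨he, hv⟩
    obtain ⟨w, rfl⟩ := Sym2.mem_iff_exists.1 hv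
    exact ⟨w, he, rfl⟩
  · rintro ⟨w, hw, rfl⟩
    exact ⟨hw, Sym2.mem_mk_left v w⟩

theorem IsNowhereZeroFlow.exists_neighborSet_eq (hθ : IsNowhereZeroFlow G θ) (hG : IsCubic G)
    (hvu : G.Adj v u) :
    ∃ a b, G.neighborSet v = {u, a, b} ∧ θ s(v, b) = θ s(v, u) + θ s(v, a) := by
  have hu : u ∈ G.neighborSet v := hvu
  obtain ⟨a, b, hab, hN⟩ : ∃ a b, a ≠ b ∧ G.neighborSet v \ {u} = {a, b} := by
    rw [← Set.ncard_eq_two, Set.ncard_sdiff_singleton_of_mem hu, hG v]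
  have hu' : u ∉ ({a, b} : Set V) := hN ▸ fun h => h.2 rfl
  have hN' : G.neighborSet v = {u, a, b} := by
    rw [← hN, Set.insert_sdiff_singleton, Set.insert_eq_of_mem hu]
  refine ⟨a, b, hN', ?_⟩
  have hsum := hθ.2 v
  rw [incidenceSet_eq_image_neighborSet, finsum_mem_image (fun _ _ _ _ h => Sym2.congr_right.1 h),
    hN', finsum_mem_insert _ hu' (Set.toFinite _), finsum_mem_pair hab, ← add_assoc,
    ← ZModModule.sub_eq_add, sub_eq_zero] at hsum
  exact hsum.symm

theorem IsNowhereZeroFlow.isProperEdgeColoring (hθ : IsNowhereZeroFlow G θ) (hG : IsCubic G) :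
    IsProperEdgeColoring G θ := by
  rintro e he f hf hef ⟨v, hve, hvf⟩ heq
  obtain ⟨u, rfl⟩ := Sym2.mem_iff_exists.1 hve
  obtain ⟨w, rfl⟩ := Sym2.mem_iff_exists.1 hvf
  obtain ⟨a, b, hN, hb⟩ := hθ.exists_neighborSet_eq hG he
  have ha0 : θ s(v, a) ≠ 0 := hθ.1 _ (show a ∈ G.neighborSet v by simp [hN])
  have hb0 : θ s(v, b) ≠ 0 := hθ.1 _ (show b ∈ G.neighborSet v by simp [hN])
  have hw : w ∈ ({u, a, b} : Set V) := hN ▸ hf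
  rcases hw with rfl | rfl | rfl
  · exact hef rfl
  · exact hb0 (by rw [hb, heq, ZModModule.add_self])
  · exact ha0 (by simpa [heq] using hb)

theorem IsNowhereZeroFlow.exists_colorSet_eq (hθ : IsNowhereZeroFlow G θ) (hG : IsCubic G)
    (hvu : G.Adj v u) :
    ∃ β ≠ 0, β ≠ θ s(v, u) ∧ colorSet G θ v = {θ s(v, u), β, θ s(v, u) + β} := by
  obtain ⟨a, b, hN, hb⟩ := hθ.exists_neighborSet_eq hG hvu
  have ha : G.Adj v a := show a ∈ G.neighborSet v by simp [hN]
  have hb0 : θ s(v, b) ≠ 0 := hθ.1 _ (show b ∈ G.neighborSet v by simp [hN])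
  refine ⟨θ s(v, a), hθ.1 _ ha, fun h => hb0 ?_, ?_⟩
  · rw [hb, h, ZModModule.add_self]
  · rw [colorSet, incidenceSet_eq_image_neighborSet, hN, ← hb]
    simp only [Set.image_insert_eq, Set.image_singleton]

theorem ncard_insert_pair_union_insert_pair {α β γ : M} (hα : α ≠ 0) (hβ : β ≠ 0) (hβα : β ≠ α)
    (hγ : γ ≠ 0) (hγα : γ ≠ α) :
    (({α, β, α + β} : Set M) ∪ {α, γ, α + γ}).ncard = 3 ∨
      (({α, β, α + β} : Set M) ∪ {α, γ, α + γ}).ncard = 5 := by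
  have hcancel (x y : M) : x + (x + y) = y := by
    rw [← add_assoc, ZModModule.add_self, zero_add]
  have hthree : ({α, β, α + β} : Set M).ncard = 3 :=
    Set.ncard_eq_three.2 ⟨α, β, α + β, by grind, by grind, by grind, rfl⟩
  by_cases h : γ = β ∨ γ = α + β
  · have heq : ({α, γ, α + γ} : Set M) = {α, β, α + β} := by
      rcases h with rfl | rfl
      · rfl
      · rw [hcancel, Set.pair_comm]
    left
    rw [heq, Set.union_self, hthree]
  · have hdisj : Disjoint ({α, β, α + β} : Set M) {γ, α + γ} := by
      simp only [Set.disjoint_left, Set.mem_insert_iff, Set.mem_singleton_iff]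
      grind
    have hunion : ({α, β, α + β} : Set M) ∪ {α, γ, α + γ} = {α, β, α + β} ∪ {γ, α + γ} := by
      rw [Set.union_insert, Set.insert_eq_of_mem (Set.mem_union_left _ (Set.mem_insert α _))]
    right
    rw [hunion, Set.ncard_union_eq hdisj, hthree, Set.ncard_pair (by grind)]

theorem IsNowhereZeroFlow.isNormalEdgeColoring (hθ : IsNowhereZeroFlow G θ) (hG : IsCubic G) :
    IsNormalEdgeColoring G θ := by
  refine ⟨hθ.isProperEdgeColoring hG, fun u v huv => ?_⟩
  obtain ⟨β, hβ, hβα, hu⟩ := hθ.exists_colorSet_eq hG huv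
  obtain ⟨γ, hγ, hγα, hv⟩ := hθ.exists_colorSet_eq hG huv.symm
  rw [Sym2.eq_swap] at hγα hv
  rw [IsPoorAt, IsRichAt, hu, hv]
  exact ncard_insert_pair_union_insert_pair (hθ.1 _ huv) hβ hβα hγ hγα

theorem IsNormalEdgeColoring.comp {C C' : Type*} {c : Sym2 V → C} {f : C → C'}
    (hc : IsNormalEdgeColoring G c) (hf : Set.InjOn f (c '' G.edgeSet)) :
    IsNormalEdgeColoring G (f ∘ c) := by
  have hcolorSet (v : V) : colorSet G c v ⊆ c '' G.edgeSet :=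
    Set.image_mono (G.incidenceSet_subset v)
  have hncard (u v : V) : (colorSet G (f ∘ c) u ∪ colorSet G (f ∘ c) v).ncard =
      (colorSet G c u ∪ colorSet G c v).ncard := by
    simp only [colorSet, Set.image_comp, ← Set.image_union]
    refine (hf.mono ?_).ncard_image
    rw [Set.image_union]
    exact Set.union_subset (hcolorSet u) (hcolorSet v)
  refine ⟨fun e he g hg heg hv h => ?_, fun u v huv => ?_⟩
  · exact hc.1 e he g hg heg hv
      (hf (Set.mem_image_of_mem c he) (Set.mem_image_of_mem c hg) h)
  · rw [IsPoorAt, IsRichAt, hncard]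
    exact hc.2 u v huv

-- The nonzero elements are the binary expansions of `1, …, 7`, which are distinct modulo `7`.
theorem exists_injOn_compl_zero_fin_seven :
    ∃ f : ZMod 2 × ZMod 2 × ZMod 2 → Fin 7, Set.InjOn f {0}ᶜ := by
  refine ⟨fun a => Fin.ofNat 7 (4 * a.1.val + 2 * a.2.1.val + a.2.2.val), ?_⟩
  unfold Set.InjOn
  decide

end SimpleGraph

theorem stmt_9 {V : Type*} [Fintype V] (G : SimpleGraph V)
    (hG : IsCubic G) (hbl : Bridgeless G) :
    ∃ c : Sym2 V → Fin 7, IsNormalEdgeColoring G c := by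
  obtain ⟨θ, hθ⟩ := hbl.exists_isNowhereZeroFlow
  obtain ⟨f, hf⟩ := exists_injOn_compl_zero_fin_seven
  have hnonzero : θ '' G.edgeSet ⊆ {0}ᶜ := Set.image_subset_iff.2 hθ.1
  exact ⟨f ∘ θ, (hθ.isNormalEdgeColoring hG).comp (hf.mono hnonzero)⟩
end

section
/- Let G be a finite simple bridgeless cubic graph and let e be any edge of G. Then G admits a nowhere-zero Z_2^3-flow θ such that the edge e is poor with respect to θ. -/
open SimpleGraph

/-!
Two values at a vertex of degree three determine the third, and the three are distinct. So it
suffices to find a nowhere-zero flow under which every value at `u` also occurs at `w`.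

If every nontrivial cut has at least three edges, follow Seymour's proof of the 8-flow theorem: an
even subgraph, whose indicator is the first coordinate of `θ`, is grown block by block until the
edges outside it carry a flow with values in the Klein four-group that vanishes on none of them.
Growing it from the edge `uw`, with no edge of the even subgraph at `u` or `w`, puts the values at
`u` and at `w` into the Klein four-group, whose three nonzero elements then occur at both.

Cuts with at most two edges are removed by contraction, which is possible away from `u` and `w`
unless a cut consists of one edge at `u` and one at `w`. These two edges then have the same value
under any flow, and so do the third edges at `u` and `w`.
-/

/-- A multigraph with vertices `V` and edges `E`, loops and parallel edges allowed. Each edge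
carries an arbitrary orientation, which only matters for integer-valued flows. -/
structure OrientedMultigraph (V E : Type*) where
  src : E → V
  tgt : E → V

namespace OrientedMultigraph

open Finset

variable {V E A : Type*}

section Cuts

variable [Fintype E] [DecidableEq V] (G : OrientedMultigraph V E)

/-- The edges with both ends in `U`. -/
def edgesWithin (U : Finset V) : Finset E := {e | G.src e ∈ U ∧ G.tgt e ∈ U}

/-- The edges, in either direction, with one end in `S` and the other in `T`. -/
def edgesBetween (S T : Finset V) : Finset E :=
  {e | (G.src e ∈ S ∧ G.tgt e ∈ T) ∨ (G.src e ∈ T ∧ G.tgt e ∈ S)}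

/-- The edges with exactly one end in `S`. The star of a vertex `v`, loops excluded, is
`G.cut {v}`. -/
def cut (S : Finset V) : Finset E :=
  {e | (G.src e ∈ S ∧ G.tgt e ∉ S) ∨ (G.src e ∉ S ∧ G.tgt e ∈ S)}

variable {G} {S T U W : Finset V} {e : E}

lemma mem_edgesWithin : e ∈ G.edgesWithin U ↔ G.src e ∈ U ∧ G.tgt e ∈ U := by
  simp [edgesWithin]

lemma mem_edgesBetween :
    e ∈ G.edgesBetween S T ↔ (G.src e ∈ S ∧ G.tgt e ∈ T) ∨ (G.src e ∈ T ∧ G.tgt e ∈ S) := by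
  simp [edgesBetween]

lemma mem_cut :
    e ∈ G.cut S ↔ (G.src e ∈ S ∧ G.tgt e ∉ S) ∨ (G.src e ∉ S ∧ G.tgt e ∈ S) := by
  simp [cut]

variable (G) in
lemma edgesBetween_comm (S T : Finset V) : G.edgesBetween S T = G.edgesBetween T S := by
  ext e
  simp only [mem_edgesBetween]
  tauto

lemma mem_cut_singleton_of_mem_edgesBetween {u w : V} (huw : u ≠ w)
    (he : e ∈ G.edgesBetween {u} {w}) : e ∈ G.cut {u} := by
  simp only [mem_edgesBetween, mem_cut, mem_singleton] at he ⊢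
  grind

lemma exists_mem_edgesBetween_of_mem_cut (he : e ∈ G.cut S) :
    ∃ x ∈ S, ∃ y ∉ S, e ∈ G.edgesBetween {x} {y} := by
  simp only [mem_edgesBetween, mem_cut, mem_singleton] at he ⊢
  grind

lemma exists_forall_mem_edgesBetween (he : e ∈ G.edgesBetween S T) :
    ∃ x ∈ T, ∀ W : Finset V, x ∈ W → e ∈ G.edgesBetween S W := by
  simp only [mem_edgesBetween] at he ⊢
  grind

lemma mem_edgesWithin_union :
    e ∈ G.edgesWithin (U ∪ W) ↔
      e ∈ G.edgesWithin U ∨ e ∈ G.edgesWithin W ∨ e ∈ G.edgesBetween U W := by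
  simp only [mem_edgesWithin, mem_edgesBetween, mem_union]
  tauto

lemma disjoint_edgesWithin_edgesWithin (h : Disjoint U W) :
    Disjoint (G.edgesWithin U) (G.edgesWithin W) := by
  simp only [Finset.disjoint_left, mem_edgesWithin] at h ⊢
  grind

lemma disjoint_edgesWithin_edgesBetween (h : Disjoint U W) :
    Disjoint (G.edgesWithin U) (G.edgesBetween U W) := by
  simp only [Finset.disjoint_left, mem_edgesWithin, mem_edgesBetween] at h ⊢
  grind

lemma edgesBetween_subset_cut (h : Disjoint S T) : G.edgesBetween S T ⊆ G.cut T := by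
  intro e
  simp only [Finset.disjoint_left, mem_edgesBetween, mem_cut] at h ⊢
  grind

lemma card_edgesBetween_union (hST : Disjoint S T) (hSU : Disjoint S U) (hTU : Disjoint T U) :
    #(G.edgesBetween S (T ∪ U)) = #(G.edgesBetween S T) + #(G.edgesBetween S U) := by
  classical
  have h_union : G.edgesBetween S (T ∪ U) = G.edgesBetween S T ∪ G.edgesBetween S U := by
    ext e
    simp only [mem_edgesBetween, mem_union]
    tauto
  rw [h_union, card_union_of_disjoint]
  simp only [Finset.disjoint_left, mem_edgesBetween] at hST hSU hTU ⊢
  grind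

lemma card_cut_union_add (h : Disjoint S T) :
    #(G.cut (S ∪ T)) + 2 * #(G.edgesBetween S T) = #(G.cut S) + #(G.cut T) := by
  classical
  have h_union : G.cut (S ∪ T) =
      (G.cut S \ G.edgesBetween S T) ∪ (G.cut T \ G.edgesBetween S T) := by
    ext e
    simp only [Finset.disjoint_left, mem_cut, mem_edgesBetween, mem_union, mem_sdiff] at h ⊢
    grind
  have h_disj : Disjoint (G.cut S \ G.edgesBetween S T) (G.cut T \ G.edgesBetween S T) := by
    simp only [Finset.disjoint_left, mem_cut, mem_edgesBetween, mem_sdiff] at h ⊢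
    grind
  have h_left : G.edgesBetween S T ⊆ G.cut S := by
    rw [edgesBetween_comm]
    exact edgesBetween_subset_cut h.symm
  have h_right : G.edgesBetween S T ⊆ G.cut T := edgesBetween_subset_cut h
  rw [h_union, card_union_of_disjoint h_disj, card_sdiff_of_subset h_left,
    card_sdiff_of_subset h_right]
  have := card_le_card h_left
  have := card_le_card h_right
  omega

variable [Fintype V]

lemma cut_compl (S : Finset V) : G.cut Sᶜ = G.cut S := by
  ext e
  simp only [mem_cut, mem_compl]
  tauto

lemma card_cut_eq_add (h : Disjoint S T) :
    #(G.cut S) = #(G.edgesBetween S T) + #(G.edgesBetween S (Tᶜ \ S)) := by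
  rw [← card_edgesBetween_union h disjoint_sdiff (by grind [Finset.disjoint_left, mem_compl])]
  congr 1
  ext e
  simp only [Finset.disjoint_left, mem_cut, mem_edgesBetween, mem_union, mem_sdiff,
    mem_compl] at h ⊢
  grind

end Cuts

section Boundary

variable [Fintype E] [DecidableEq V] [AddCommGroup A] (G : OrientedMultigraph V E)

/-- The net outflow of an edge weighting at every vertex. Flows are the weightings of boundary
zero. -/
def boundary : (E → A) →+ (V → A) where
  toFun g := ∑ e, (Pi.single (G.src e) (g e) - Pi.single (G.tgt e) (g e))
  map_zero' := by simp
  map_add' g h := by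
    simp only [Pi.add_apply, Pi.single_add, ← sum_add_distrib]
    exact sum_congr rfl fun e _ ↦ by abel

lemma boundary_apply (g : E → A) (v : V) :
    G.boundary g v =
      ∑ e, ((if G.src e = v then g e else 0) - if G.tgt e = v then g e else 0) := by
  simp [boundary, Pi.single_apply, eq_comm]

lemma boundary_single [DecidableEq E] (e : E) (a : A) :
    G.boundary (Pi.single e a) = Pi.single (G.src e) a - Pi.single (G.tgt e) a := by
  change ∑ e', _ = _
  rw [sum_eq_single_of_mem e (mem_univ e) fun e' _ he' ↦ by simp [he'], Pi.single_eq_same]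

lemma boundary_comp {B : Type*} [AddCommGroup B] (φ : A →+ B) (g : E → A) (v : V) :
    G.boundary (φ ∘ g) v = φ (G.boundary g v) := by
  simp [boundary_apply, apply_ite φ]

variable {G}

lemma boundary_apply_congr {g h : E → A} {v : V}
    (hgh : ∀ e, G.src e = v ∨ G.tgt e = v → g e = h e) :
    G.boundary g v = G.boundary h v := by
  simp only [boundary_apply]
  refine sum_congr rfl fun e _ ↦ ?_
  grind

lemma boundary_apply_eq_zero {U : Finset V} {g : E → A} (hg : ∀ e ∉ G.edgesWithin U, g e = 0)
    {v : V} (hv : v ∉ U) : G.boundary g v = 0 := by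
  have h_zero : G.boundary g v = G.boundary (0 : E → A) v :=
    boundary_apply_congr fun e he ↦ hg e <| by grind [mem_edgesWithin]
  rw [h_zero, map_zero, Pi.zero_apply]

lemma sum_boundary (g : E → A) (S : Finset V) :
    ∑ v ∈ S, G.boundary g v =
      ∑ e, ((if G.src e ∈ S then g e else 0) - if G.tgt e ∈ S then g e else 0) := by
  simp only [boundary_apply]
  rw [sum_comm]
  exact sum_congr rfl fun e _ ↦ by simp [sum_sub_distrib]

lemma sum_boundary_eq_zero {g : E → A} {S : Finset V}
    (hg : ∀ e, g e ≠ 0 → (G.src e ∈ S ↔ G.tgt e ∈ S)) : ∑ v ∈ S, G.boundary g v = 0 := by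
  rw [sum_boundary]
  refine sum_eq_zero fun e _ ↦ ?_
  grind

lemma sum_boundary_eq_sum_cut [Module (ZMod 2) A] (g : E → A) (S : Finset V) :
    ∑ v ∈ S, G.boundary g v = ∑ e ∈ G.cut S, g e := by
  rw [sum_boundary, cut, sum_filter]
  refine sum_congr rfl fun e _ ↦ ?_
  by_cases hsrc : G.src e ∈ S <;> by_cases htgt : G.tgt e ∈ S <;>
    simp [hsrc, htgt, ZModModule.neg_eq_self]

lemma boundary_apply_eq_sum_cut [Module (ZMod 2) A] (g : E → A) (v : V) :
    G.boundary g v = ∑ e ∈ G.cut {v}, g e := by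
  rw [← sum_boundary_eq_sum_cut, sum_singleton]

lemma sum_cut_eq_zero [Module (ZMod 2) A] {g : E → A} (hg : G.boundary g = 0) (S : Finset V) :
    ∑ e ∈ G.cut S, g e = 0 := by
  simp [← sum_boundary_eq_sum_cut, hg]

end Boundary

/-- The Klein four-group, in which the flow completing an even subgraph takes its values. -/
abbrev Klein := ZMod 2 × ZMod 2

lemma exists_ne_zero_iff_mem_and_sum_eq {C : Finset E} {p q : E} (hp : p ∈ C) (hq : q ∈ C)
    (hpq : p ≠ q) (T : Finset E) (r δ : Klein) :
    ∃ g : E → Klein, (∀ e, g e ≠ 0 ↔ e ∈ C) ∧ ∑ e ∈ C, g e = r ∧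
      (p ∈ T → q ∉ T → ∑ e ∈ T, g e ≠ δ) := by
  classical
  have h_klein : ∀ r δ : Klein, ∃ a b : Klein, a ≠ 0 ∧ b ≠ 0 ∧ a + b = r ∧ a ≠ δ := by decide
  let h : E → Klein := fun e ↦ if e ∈ C ∧ e ≠ p ∧ e ≠ q then (1, 0) else 0
  obtain ⟨a, b, ha, hb, hab, haδ⟩ := h_klein (r - ∑ e ∈ C, h e) (δ - ∑ e ∈ T, h e)
  refine ⟨h + Pi.single p a + Pi.single q b, fun e ↦ ?_, ?_, fun hpT hqT ↦ ?_⟩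
  · rcases eq_or_ne e p with rfl | hep
    · simp [h, hp, hpq, ha]
    rcases eq_or_ne e q with rfl | heq
    · simp [h, hq, hep, hb]
    · simp [h, hep, heq]
  · simp [sum_add_distrib, hp, hq, add_assoc, hab]
  · simpa [sum_add_distrib, hpT, hqT, eq_sub_iff_add_eq'] using haδ

section Completable

variable [Fintype E] [DecidableEq V] (G : OrientedMultigraph V E)

/-- Every Klein-valued demand on `W` of total zero is the boundary of a weighting supported on the
edges of `F` within `W`: an algebraic form of `F` connecting `W`. -/
def Spans (F : Set E) (W : Finset V) : Prop :=
  ∀ D : V → Klein, ∑ v ∈ W, D v = 0 →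
    ∃ g : E → Klein, (∀ e, g e ≠ 0 → e ∈ F ∧ e ∈ G.edgesWithin W) ∧
      ∀ v ∈ W, G.boundary g v = D v

/-- `f` is the indicator of an even subgraph within `U` whose complement within `U` carries, for
every Klein-valued demand `D` of total zero on `U` that vanishes nowhere on `X`, a weighting with
boundary `D` that is nonzero wherever `f` is zero. -/
structure IsCompletable (X : Finset V) (f : E → ZMod 2) (U : Finset V) : Prop where
  support : ∀ e ∉ G.edgesWithin U, f e = 0
  boundary_eq_zero : G.boundary f = 0
  exists_completion : ∀ D : V → Klein, (∀ v ∈ X, D v ≠ 0) → ∑ v ∈ U, D v = 0 →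
    ∃ g : E → Klein, (∀ e ∉ G.edgesWithin U, g e = 0) ∧ (∀ v ∈ U, G.boundary g v = D v) ∧
      ∀ e ∈ G.edgesWithin U, f e = 0 → g e ≠ 0

variable {G} {F : Set E} {X Y U W : Finset V} {f fU fW : E → ZMod 2}

lemma spans_singleton (x : V) : G.Spans F {x} :=
  fun D hD ↦ ⟨0, by simp, by simpa [eq_comm] using hD⟩

lemma Spans.insert (hW : G.Spans F W) {p : E} {y : V} (hpF : p ∈ F) (hy : y ∉ W)
    (hp : p ∈ G.edgesBetween W {y}) : G.Spans F (insert y W) := by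
  classical
  intro D hD
  have hyW : Disjoint W {y} := disjoint_singleton_right.mpr hy
  have hp_cutW : p ∈ G.cut W := edgesBetween_subset_cut hyW.symm (by rwa [edgesBetween_comm])
  have hp_cuty : p ∈ G.cut {y} := edgesBetween_subset_cut hyW hp
  have h_sum : ∑ v ∈ W, (D - G.boundary (Pi.single p (D y))) v = 0 := by
    rw [sum_insert hy, add_comm] at hD
    rw [← ZModModule.sub_eq_add] at hD
    simpa [sum_sub_distrib, sum_boundary_eq_sum_cut, hp_cutW] using hD
  obtain ⟨g, hg_supp, hg_boundary⟩ := hW _ h_sum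
  have hg_zero (e) (he : e ∉ G.edgesWithin W) : g e = 0 := by
    by_contra h
    exact he (hg_supp e h).2
  refine ⟨g + Pi.single p (D y), fun e he ↦ ?_, fun v hv ↦ ?_⟩
  · rcases eq_or_ne e p with rfl | hep
    · refine ⟨hpF, ?_⟩
      simp only [mem_edgesBetween, mem_edgesWithin, mem_singleton, mem_insert] at hp ⊢
      tauto
    · have := hg_supp e (by simpa [hep] using he)
      exact ⟨this.1, by simp_all [mem_edgesWithin]⟩
  · rw [map_add, Pi.add_apply]
    rcases mem_insert.mp hv with rfl | hvW
    · simp [boundary_apply_eq_zero hg_zero hy, boundary_apply_eq_sum_cut, hp_cuty]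
    · simp [hg_boundary v hvW]

lemma Spans.isCompletable (h_spans : G.Spans {e | f e ≠ 0} W)
    (h_supp : ∀ e ∉ G.edgesWithin W, f e = 0) (h_flow : G.boundary f = 0) :
    G.IsCompletable ∅ f W := by
  classical
  refine ⟨h_supp, h_flow, fun D _ hD ↦ ?_⟩
  let g₀ : E → Klein := fun e ↦ if e ∈ G.edgesWithin W ∧ f e = 0 then (1, 0) else 0
  have hg₀_sum : ∑ v ∈ W, G.boundary g₀ v = 0 :=
    sum_boundary_eq_zero fun e he ↦ by grind [mem_edgesWithin]
  obtain ⟨g, hg_supp, hg_boundary⟩ := h_spans (D - G.boundary g₀) (by simp [hD, hg₀_sum])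
  refine ⟨g₀ + g, fun e he ↦ ?_, fun v hv ↦ by simp [hg_boundary v hv], fun e he hfe ↦ ?_⟩
  · have : g e = 0 := by
      by_contra h
      exact he (hg_supp e h).2
    simp [g₀, he, this]
  · have : g e = 0 := by
      by_contra h
      exact (hg_supp e h).1 hfe
    simp [g₀, he, hfe, this]

lemma isCompletable_singleton (x : V) : G.IsCompletable ∅ 0 {x} :=
  (spans_singleton x).isCompletable (by simp) (map_zero _)

/-- The weighting `g₀` of the edges between the two sides is chosen first; it reduces the demand on
`U ∪ W` to one of total zero on each side. -/
lemma IsCompletable.union (hU : G.IsCompletable X fU U) (hW : G.IsCompletable ∅ fW W)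
    (hUW : Disjoint U W)
    (h_between : ∀ D : V → Klein, (∀ v ∈ Y, D v ≠ 0) → ∑ v ∈ U ∪ W, D v = 0 →
      ∃ g₀ : E → Klein, (∀ e, g₀ e ≠ 0 ↔ e ∈ G.edgesBetween U W) ∧
        ∑ e ∈ G.edgesBetween U W, g₀ e = ∑ v ∈ W, D v ∧ ∀ v ∈ X, G.boundary g₀ v ≠ D v) :
    G.IsCompletable Y (fU + fW) (U ∪ W) := by
  refine ⟨fun e he ↦ ?_, by rw [map_add, hU.boundary_eq_zero, hW.boundary_eq_zero, add_zero],
    fun D hDY hD ↦ ?_⟩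
  · rw [mem_edgesWithin_union, not_or, not_or] at he
    simp [hU.support e he.1, hW.support e he.2.1]
  obtain ⟨g₀, hg₀_supp, hg₀_sum, hg₀_X⟩ := h_between D hDY hD
  have h_sumW : ∑ v ∈ W, (D - G.boundary g₀) v = 0 := by
    have : ∑ e ∈ G.cut W, g₀ e = ∑ e ∈ G.edgesBetween U W, g₀ e :=
      (sum_subset (edgesBetween_subset_cut hUW) fun e _ he ↦ by simpa [he] using hg₀_supp e).symm
    simp [sum_sub_distrib, sum_boundary_eq_sum_cut, this, hg₀_sum]
  have h_sumU : ∑ v ∈ U, (D - G.boundary g₀) v = 0 := by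
    have h_union : ∑ v ∈ U ∪ W, G.boundary g₀ v = 0 := sum_boundary_eq_zero fun e he ↦ by
      grind [mem_edgesBetween]
    have := sum_union hUW (f := D - G.boundary g₀)
    rwa [h_sumW, add_zero, sum_congr rfl fun v _ ↦ Pi.sub_apply D _ v, sum_sub_distrib, hD,
      h_union, sub_zero, eq_comm] at this
  obtain ⟨gU, hgU_supp, hgU_boundary, hgU_ne⟩ := hU.exists_completion _
    (fun v hv ↦ sub_ne_zero.mpr (hg₀_X v hv).symm) h_sumU
  obtain ⟨gW, hgW_supp, hgW_boundary, hgW_ne⟩ := hW.exists_completion _ (by simp) h_sumW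
  have h_within := Finset.disjoint_left.mp (disjoint_edgesWithin_edgesWithin (G := G) hUW)
  have h_betweenU := Finset.disjoint_left.mp (disjoint_edgesWithin_edgesBetween (G := G) hUW)
  have h_betweenW := Finset.disjoint_left.mp (disjoint_edgesWithin_edgesBetween (G := G) hUW.symm)
  rw [edgesBetween_comm] at h_betweenW
  refine ⟨g₀ + gU + gW, fun e he ↦ ?_, fun v hv ↦ ?_, fun e he hfe ↦ ?_⟩
  · grind [mem_edgesWithin_union, Pi.add_apply]
  · rcases mem_union.mp hv with hvU | hvW
    · simp [hgU_boundary v hvU, boundary_apply_eq_zero hgW_supp (Finset.disjoint_left.mp hUW hvU)]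
    · simp [hgW_boundary v hvW, boundary_apply_eq_zero hgU_supp (Finset.disjoint_right.mp hUW hvW)]
  · have := hU.support e
    have := hW.support e
    grind [mem_edgesWithin_union, Pi.add_apply]

lemma IsCompletable.union_of_two_edges (hU : G.IsCompletable X fU U)
    (hW : G.IsCompletable ∅ fW W) (hUW : Disjoint U W) {p q : E} (hpq : p ≠ q)
    (hp : p ∈ G.edgesBetween U W) (hq : q ∈ G.edgesBetween U W)
    {u : V} (hX : X ⊆ {u}) (hu : u ∈ X → p ∈ G.cut {u} ∧ q ∉ G.cut {u}) :
    G.IsCompletable ∅ (fU + fW) (U ∪ W) := by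
  refine hU.union hW hUW fun D _ _ ↦ ?_
  obtain ⟨g₀, hg₀_supp, hg₀_sum, hg₀_u⟩ :=
    exists_ne_zero_iff_mem_and_sum_eq hp hq hpq (G.cut {u}) (∑ v ∈ W, D v) (D u)
  refine ⟨g₀, hg₀_supp, hg₀_sum, fun v hv ↦ ?_⟩
  obtain rfl : v = u := mem_singleton.mp (hX hv)
  rw [boundary_apply_eq_sum_cut]
  exact hg₀_u (hu hv).1 (hu hv).2

lemma isCompletable_pair {u w : V} {e₀ : E} (huw : u ≠ w) (he₀ : G.edgesBetween {u} {w} = {e₀}) :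
    G.IsCompletable {u} 0 {u, w} := by
  classical
  have h := (isCompletable_singleton (G := G) u).union (isCompletable_singleton w) (Y := {u})
    (disjoint_singleton.mpr huw) fun D hDu hD ↦ by
      rw [singleton_union, sum_pair huw, ← ZModModule.sub_eq_add, sub_eq_zero] at hD
      have := hDu u (mem_singleton_self u)
      exact ⟨Pi.single e₀ (D u), by simp [he₀, Pi.single_apply, this], by simp [he₀, hD], by simp⟩
  rwa [add_zero, singleton_union] at h

end Completable

section UnitFlow

variable [Fintype E] [DecidableEq V] (G : OrientedMultigraph V E)

/-- An integral flow of capacity one on the edges within `L`, with sources and sinks allowed. -/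
def IsUnitFlow (L : Finset V) (φ : E → ℤ) : Prop :=
  ∀ e, |φ e| ≤ 1 ∧ (φ e ≠ 0 → e ∈ G.edgesWithin L)

/-- The value of a unit of flow leaving `S` along `e`, for `e ∈ G.cut S`. -/
def outward (S : Finset V) (e : E) : ℤ := if G.src e ∈ S then 1 else -1

/-- `R` consists of vertices to which one more unit of flow can be sent from `x` by modifying `φ`
within `R` only. -/
def Reroutable (L : Finset V) (φ : E → ℤ) (x : V) (R : Finset V) : Prop :=
  ∀ v ∈ R, ∃ ψ : E → ℤ, G.IsUnitFlow L ψ ∧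
    G.boundary ψ = G.boundary φ + Pi.single x 1 - Pi.single v 1 ∧ ∀ e ∉ G.edgesWithin R, ψ e = φ e

variable {G} {L R : Finset V} {φ : E → ℤ} {x y : V} {e : E}

lemma boundary_single_outward [DecidableEq E] {v : V} (hv : v ∈ R) (hy : y ∉ R)
    (he : e ∈ G.edgesBetween {v} {y}) :
    G.boundary (Pi.single e (G.outward R e)) = Pi.single v 1 - Pi.single y 1 := by
  simp only [mem_edgesBetween, mem_singleton] at he
  rcases he with ⟨rfl, rfl⟩ | ⟨rfl, rfl⟩
  · simp [boundary_single, outward, hv]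
  · simp [boundary_single, outward, hy, Pi.single_neg, sub_eq_add_neg]

lemma sum_boundary_eq_sum_outward (φ : E → ℤ) (S : Finset V) :
    ∑ v ∈ S, G.boundary φ v = ∑ e ∈ G.cut S, G.outward S e * φ e := by
  rw [sum_boundary, cut, sum_filter]
  refine sum_congr rfl fun e _ ↦ ?_
  by_cases hsrc : G.src e ∈ S <;> by_cases htgt : G.tgt e ∈ S <;> simp [outward, hsrc, htgt]

lemma Reroutable.insert_of_residual (hR : G.Reroutable L φ x R) (hy : y ∉ R)
    (he : e ∈ G.edgesBetween R {y}) (heL : e ∈ G.edgesWithin L)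
    (h_residual : |φ e + G.outward R e| ≤ 1) : G.Reroutable L φ x (insert y R) := by
  classical
  have h_mono {e'} (he' : e' ∉ G.edgesWithin (insert y R)) : e' ∉ G.edgesWithin R := by
    simp only [mem_edgesWithin, mem_insert] at he' ⊢
    tauto
  intro z hz
  rcases mem_insert.mp hz with rfl | hzR
  · obtain ⟨v, hv, hve⟩ := exists_forall_mem_edgesBetween (G.edgesBetween_comm R {z} ▸ he)
    obtain ⟨ψ, hψ, hψ_boundary, hψ_eq⟩ := hR v hv
    have heR : e ∉ G.edgesWithin R :=
      Finset.disjoint_right.mp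
        (disjoint_edgesWithin_edgesBetween (disjoint_singleton_right.mpr hy)) he
    refine ⟨ψ + Pi.single e (G.outward R e), fun e' ↦ ?_, ?_, fun e' he' ↦ ?_⟩
    · rcases eq_or_ne e' e with rfl | hne
      · simpa [hψ_eq _ heR, heL] using h_residual
      · simpa [hne] using hψ e'
    · rw [map_add, hψ_boundary, boundary_single_outward hv hy
        (G.edgesBetween_comm {z} {v} ▸ hve {v} (mem_singleton_self v))]
      abel
    · have hne : e' ≠ e := by
        rintro rfl
        simp only [mem_edgesWithin, mem_edgesBetween, mem_insert, mem_singleton] at he' he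
        tauto
      simp [hne, hψ_eq e' (h_mono he')]
  · obtain ⟨ψ, hψ, hψ_boundary, hψ_eq⟩ := hR z hzR
    exact ⟨ψ, hψ, hψ_boundary, fun e' he' ↦ hψ_eq e' (h_mono he')⟩

lemma IsUnitFlow.exists_reroutable_saturated (hφ : G.IsUnitFlow L φ) (hx : x ∈ L) :
    ∃ R ⊆ L, x ∈ R ∧ G.Reroutable L φ x R ∧
      ∀ e ∈ G.edgesBetween R (L \ R), φ e = G.outward R e := by
  classical
  have hx_mem : {x} ∈ L.powerset.filter fun R ↦ x ∈ R ∧ G.Reroutable L φ x R := by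
    simp only [mem_filter, mem_powerset, singleton_subset_iff, mem_singleton_self, true_and]
    refine ⟨hx, fun v hv ↦ ⟨φ, hφ, ?_, fun _ _ ↦ rfl⟩⟩
    rw [mem_singleton.mp hv, add_sub_cancel_right]
  obtain ⟨R, hR⟩ := exists_maximal ⟨_, hx_mem⟩
  obtain ⟨hRL, hxR, hR_reroutable⟩ := by simpa using hR.prop
  refine ⟨R, hRL, hxR, hR_reroutable, fun e he ↦ ?_⟩
  by_contra h_ne
  obtain ⟨y, hy, hye⟩ := exists_forall_mem_edgesBetween he
  obtain ⟨hyL, hyR⟩ := mem_sdiff.mp hy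
  have h_residual : |φ e + G.outward R e| ≤ 1 := by
    have := (hφ e).1
    grind [outward]
  have heL : e ∈ G.edgesWithin L := by
    simp only [mem_edgesBetween, mem_edgesWithin, mem_sdiff] at he ⊢
    grind
  have h_insert : insert y R ∈ L.powerset.filter fun R ↦ x ∈ R ∧ G.Reroutable L φ x R := by
    simpa [insert_subset_iff, hyL, hRL, hxR] using
      hR_reroutable.insert_of_residual hyR (hye {y} (mem_singleton_self y)) heL h_residual
  exact hyR (hR.le_of_ge h_insert (subset_insert y R) (mem_insert_self y R))

lemma IsUnitFlow.sum_boundary_eq_card (hφ : G.IsUnitFlow L φ)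
    (h_sat : ∀ e ∈ G.edgesBetween R (L \ R), φ e = G.outward R e) :
    ∑ v ∈ R, G.boundary φ v = #(G.edgesBetween R (L \ R)) := by
  have h_subset : G.edgesBetween R (L \ R) ⊆ G.cut R := by
    rw [edgesBetween_comm]
    exact edgesBetween_subset_cut sdiff_disjoint
  have h_zero (e) (he : e ∈ G.cut R) (he' : e ∉ G.edgesBetween R (L \ R)) :
      G.outward R e * φ e = 0 := by
    have := (hφ e).2
    simp only [mem_cut, mem_edgesBetween, mem_edgesWithin, mem_sdiff] at *
    grind
  rw [sum_boundary_eq_sum_outward, ← sum_subset h_subset h_zero, card_eq_sum_ones, Nat.cast_sum]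
  refine sum_congr rfl fun e he ↦ ?_
  rw [h_sat e he, outward]
  split <;> rfl

/-- Menger's theorem for edges, by augmenting paths. -/
theorem exists_isUnitFlow (hx : x ∈ L) (k : ℕ)
    (h_cut : ∀ S ⊆ L, x ∈ S → y ∉ S → k ≤ #(G.edgesBetween S (L \ S))) :
    ∃ φ, G.IsUnitFlow L φ ∧ G.boundary φ = Pi.single x (k : ℤ) - Pi.single y (k : ℤ) := by
  induction k with
  | zero => exact ⟨0, fun e ↦ by simp, by simp⟩
  | succ k ih =>
    obtain ⟨φ, hφ, hφ_boundary⟩ := ih fun S hSL hxS hyS ↦ by grind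
    obtain ⟨R, hRL, hxR, hR, h_sat⟩ := hφ.exists_reroutable_saturated hx
    have hyR : y ∈ R := by
      by_contra hyR
      have h_sum := hφ.sum_boundary_eq_card h_sat
      rw [hφ_boundary] at h_sum
      simp only [Pi.sub_apply, sum_sub_distrib, sum_pi_single', hxR, hyR, if_true, if_false,
        sub_zero, Nat.cast_inj] at h_sum
      have := h_cut R hRL hxR hyR
      omega
    obtain ⟨ψ, hψ, hψ_boundary, -⟩ := hR y hyR
    refine ⟨ψ, hψ, ?_⟩
    rw [hψ_boundary, hφ_boundary, Nat.cast_succ, Pi.single_add, Pi.single_add]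
    abel

lemma exists_spans_closed (F : Set E) (hF : ∀ e ∈ F, e ∈ G.edgesWithin L) (hx : x ∈ L) :
    ∃ W ⊆ L, x ∈ W ∧ G.Spans F W ∧ ∀ e ∈ F, G.src e ∈ W ↔ G.tgt e ∈ W := by
  classical
  obtain ⟨W, hW⟩ := (L.powerset.filter fun W ↦ x ∈ W ∧ G.Spans F W).exists_maximal
    ⟨{x}, by simpa [hx] using spans_singleton x⟩
  obtain ⟨hWL, hxW, hW_spans⟩ := by simpa using hW.prop
  refine ⟨W, hWL, hxW, hW_spans, fun e heF ↦ ?_⟩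
  by_contra h_iff
  have he_cut : e ∈ G.cut W := mem_cut.mpr (by tauto)
  obtain ⟨v, hv, y, hy, he⟩ := exists_mem_edgesBetween_of_mem_cut he_cut
  have he_between : e ∈ G.edgesBetween W {y} := by
    simp only [mem_edgesBetween, mem_singleton] at he ⊢
    grind
  have hyL : y ∈ L := by
    have := hF e heF
    simp only [mem_edgesBetween, mem_edgesWithin, mem_singleton] at he this
    grind
  have h_insert : insert y W ∈ L.powerset.filter fun W ↦ x ∈ W ∧ G.Spans F W := by
    simpa [insert_subset_iff, hyL, hWL, hxW] using hW_spans.insert heF hy he_between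
  exact hy (hW.le_of_ge h_insert (subset_insert y W) (mem_insert_self y W))

/-- Two edge-disjoint paths between `x` and `y` form an even subgraph; it is reduced to its
component containing `x`. -/
lemma exists_isCompletable_of_two_le_card
    (h_cut : ∀ S ⊆ L, S.Nonempty → S ≠ L → 2 ≤ #(G.edgesBetween S (L \ S)))
    (hx : x ∈ L) (hy : y ∈ L) :
    ∃ W ⊆ L, x ∈ W ∧ y ∈ W ∧ ∃ f, G.IsCompletable ∅ f W := by
  classical
  obtain ⟨φ, hφ, hφ_boundary⟩ := G.exists_isUnitFlow hx 2 (y := y) fun S hSL hxS hyS ↦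
    h_cut S hSL ⟨x, hxS⟩ fun h ↦ hyS (h ▸ hy)
  obtain ⟨W, hWL, hxW, hW_spans, hW_closed⟩ :=
    exists_spans_closed {e | φ e ≠ 0} (fun e ↦ (hφ e).2) hx
  have hyW : y ∈ W := by
    by_contra hyW
    have h_sum := sum_boundary_eq_zero hW_closed
    simp [hφ_boundary, sum_sub_distrib, hxW, hyW] at h_sum
  have h_parity (e) : (φ e : ZMod 2) = 0 ↔ φ e = 0 := by
    have := (hφ e).1
    obtain h | h | h : φ e = -1 ∨ φ e = 0 ∨ φ e = 1 := by grind
    all_goals rw [h]; decide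
  let f : E → ZMod 2 := fun e ↦ if e ∈ G.edgesWithin W then (φ e : ZMod 2) else 0
  have hf_supp (e) (he : e ∉ G.edgesWithin W) : f e = 0 := if_neg he
  refine ⟨W, hWL, hxW, hyW, f, Spans.isCompletable (fun D hD ↦ ?_) hf_supp (funext fun v ↦ ?_)⟩
  · obtain ⟨g, hg_supp, hg_boundary⟩ := hW_spans D hD
    refine ⟨g, fun e he ↦ ⟨?_, (hg_supp e he).2⟩, hg_boundary⟩
    simpa [f, (hg_supp e he).2, h_parity] using (hg_supp e he).1
  · by_cases hv : v ∈ W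
    · have h_congr : G.boundary f v = G.boundary (Int.castAddHom (ZMod 2) ∘ φ) v :=
        boundary_apply_congr fun e he ↦ by
          change f e = (φ e : ZMod 2)
          have := hW_closed e
          have := h_parity e
          simp only [f, mem_edgesWithin]
          grind
      rw [h_congr, boundary_comp, hφ_boundary]
      simp only [Pi.sub_apply, Pi.single_apply, Pi.zero_apply]
      split_ifs <;> decide
    · exact boundary_apply_eq_zero hf_supp hv

end UnitFlow

lemma eq_or_eq_or_eq_of_add_add_eq_zero : ∀ a b c d : Klein,
    a ≠ 0 ∧ b ≠ 0 ∧ c ≠ 0 ∧ d ≠ 0 ∧ a + b + c = 0 → a = d ∨ b = d ∨ c = d := by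
  decide

section NowhereZero

variable [Fintype E] [DecidableEq V] (G : OrientedMultigraph V E)

/-- A flow of value zero at no edge. -/
def IsNZFlow [AddCommGroup A] (θ : E → A) : Prop :=
  G.boundary θ = 0 ∧ ∀ e, θ e ≠ 0

variable {G} {u w : V}

lemma IsNZFlow.image_cut_subset_of_fst_eq_zero {θ : E → ZMod 2 × Klein} (hθ : G.IsNZFlow θ)
    (hw : #(G.cut {w}) = 3) (h_zero : ∀ e, e ∈ G.cut {u} ∨ e ∈ G.cut {w} → (θ e).1 = 0) :
    θ '' G.cut {u} ⊆ θ '' G.cut {w} := by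
  classical
  rintro _ ⟨d, hd, rfl⟩
  obtain ⟨a, b, c, hab, hac, hbc, h_cut⟩ := card_eq_three.mp hw
  have h_sum := congrArg Prod.snd (sum_cut_eq_zero hθ.1 {w})
  rw [h_cut, sum_insert (by simp [hab, hac]), sum_pair hbc, ← add_assoc] at h_sum
  have h_snd_ne {e} (he : (θ e).1 = 0) : (θ e).2 ≠ 0 := fun h ↦ hθ.2 e (Prod.ext he h)
  have ha := h_zero a (.inr (by simp [h_cut]))
  have hb := h_zero b (.inr (by simp [h_cut]))
  have hc := h_zero c (.inr (by simp [h_cut]))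
  have hd := h_zero d (.inl hd)
  rw [h_cut]
  obtain h | h | h := eq_or_eq_or_eq_of_add_add_eq_zero _ _ _ _
    ⟨h_snd_ne ha, h_snd_ne hb, h_snd_ne hc, h_snd_ne hd, h_sum⟩
  · exact ⟨a, by simp, Prod.ext (ha.trans hd.symm) h⟩
  · exact ⟨b, by simp, Prod.ext (hb.trans hd.symm) h⟩
  · exact ⟨c, by simp, Prod.ext (hc.trans hd.symm) h⟩

end NowhereZero

section EndBlock

variable [Fintype E] [DecidableEq V] {G : OrientedMultigraph V E}

lemma exists_subset_forall_two_le_card {M : Finset V} (hM : M.Nonempty) :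
    ∃ L ⊆ M, L.Nonempty ∧ #(G.edgesBetween L (M \ L)) ≤ 1 ∧
      ∀ S ⊆ L, S.Nonempty → S ≠ L → 2 ≤ #(G.edgesBetween S (L \ S)) := by
  obtain ⟨L, hL⟩ := (M.powerset.filter
    fun L ↦ L.Nonempty ∧ #(G.edgesBetween L (M \ L)) ≤ 1).exists_minimal
      ⟨M, by simp [hM, edgesBetween]⟩
  obtain ⟨hLM, hL_nonempty, hL_card⟩ := by simpa using hL.prop
  have h_minimal (S) (hSL : S ⊆ L) (hS : S.Nonempty) (hS_ne : S ≠ L) :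
      2 ≤ #(G.edgesBetween S (L \ S)) + #(G.edgesBetween S (M \ L)) := by
    have h_union : L \ S ∪ M \ L = M \ S := by grind
    rw [← card_edgesBetween_union disjoint_sdiff (by grind [Finset.disjoint_left])
      (by grind [Finset.disjoint_left]), h_union]
    by_contra! h_lt
    exact hS_ne (hSL.antisymm (hL.le_of_le
      (by simpa [hSL.trans hLM, hS] using Nat.le_of_lt_succ h_lt) hSL))
  refine ⟨L, hLM, hL_nonempty, hL_card, fun S hSL hS hS_ne ↦ ?_⟩
  have h_left := h_minimal S hSL hS hS_ne
  have h_right := h_minimal (L \ S) sdiff_subset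
    (sdiff_nonempty.mpr fun h ↦ hS_ne (hSL.antisymm h)) fun h ↦ by
      obtain ⟨v, hv⟩ := hS
      grind
  have h_split := card_edgesBetween_union (G := G) (S := M \ L) (T := S) (U := L \ S)
    (by grind [Finset.disjoint_left]) (by grind [Finset.disjoint_left]) disjoint_sdiff
  rw [union_sdiff_of_subset hSL, G.edgesBetween_comm _ L, G.edgesBetween_comm _ S,
    G.edgesBetween_comm _ (L \ S)] at h_split
  rw [Finset.sdiff_sdiff_eq_self hSL, G.edgesBetween_comm (L \ S) S] at h_right
  omega

lemma exists_isCompletable_edgesBetween {U L : Finset V} {p q : E}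
    (h_cut : ∀ S ⊆ L, S.Nonempty → S ≠ L → 2 ≤ #(G.edgesBetween S (L \ S)))
    (hp : p ∈ G.edgesBetween U L) (hq : q ∈ G.edgesBetween U L) :
    ∃ W ⊆ L, W.Nonempty ∧ (∃ f, G.IsCompletable ∅ f W) ∧
      p ∈ G.edgesBetween U W ∧ q ∈ G.edgesBetween U W := by
  obtain ⟨x, hx, hxp⟩ := exists_forall_mem_edgesBetween hp
  obtain ⟨y, hy, hyq⟩ := exists_forall_mem_edgesBetween hq
  obtain ⟨W, hWL, hxW, hyW, hf⟩ := exists_isCompletable_of_two_le_card h_cut hx hy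
  exact ⟨W, hWL, ⟨x, hxW⟩, hf, hxp W hxW, hyq W hyW⟩

end EndBlock

section EdgeConnected

variable [Fintype V] [Fintype E] [DecidableEq V] (G : OrientedMultigraph V E)

/-- Every nontrivial cut has at least `k` edges. -/
def IsEdgeConnected (k : ℕ) : Prop :=
  ∀ S : Finset V, S.Nonempty → S ≠ univ → k ≤ #(G.cut S)

variable {G} {U : Finset V} {f : E → ZMod 2}

lemma IsCompletable.exists_ssuperset (hf : G.IsCompletable ∅ f U) (hG : G.IsEdgeConnected 3)
    (hU : U.Nonempty) (hU_ne : U ≠ univ) :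
    ∃ f' U', U ⊂ U' ∧ G.IsCompletable ∅ f' U' ∧ ∀ e ∉ G.edgesWithin Uᶜ, f' e = f e := by
  obtain ⟨L, hLU, hL, hL_card, hL_cut⟩ := exists_subset_forall_two_le_card (G := G)
    (M := Uᶜ) (by rwa [nonempty_iff_ne_empty, Ne, compl_eq_empty_iff])
  have hUL : Disjoint U L := disjoint_of_subset_right hLU disjoint_compl_right
  have h_two : 1 < #(G.edgesBetween U L) := by
    have h_three := hG L hL fun h ↦ by
      obtain ⟨v, hv⟩ := hU
      exact Finset.disjoint_left.mp hUL hv (h ▸ mem_univ v)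
    rw [card_cut_eq_add hUL.symm, edgesBetween_comm] at h_three
    omega
  obtain ⟨p, hp, q, hq, hpq⟩ := one_lt_card.mp h_two
  obtain ⟨W, hWL, ⟨x, hx⟩, ⟨fW, hfW⟩, hpW, hqW⟩ := exists_isCompletable_edgesBetween hL_cut hp hq
  have hUW : Disjoint U W := disjoint_of_subset_right hWL hUL
  refine ⟨f + fW, U ∪ W, ?_, hf.union_of_two_edges hfW hUW hpq hpW hqW (u := x) (by simp)
    (by simp), fun e he ↦ ?_⟩
  · exact ⟨subset_union_left, fun h ↦
      Finset.disjoint_right.mp hUW hx (h (mem_union_right U hx))⟩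
  · have he' : e ∉ G.edgesWithin W := fun h ↦ he <| by
      simp only [mem_edgesWithin] at h ⊢
      exact ⟨hLU (hWL h.1), hLU (hWL h.2)⟩
    simp [hfW.support e he']

lemma IsCompletable.exists_univ (hf : G.IsCompletable ∅ f U) (hG : G.IsEdgeConnected 3)
    (hU : U.Nonempty) :
    ∃ f', G.IsCompletable ∅ f' univ ∧ ∀ e ∉ G.edgesWithin Uᶜ, f' e = f e := by
  induction U using WellFoundedGT.induction generalizing f with
  | ind U ih =>
    by_cases hU_ne : U = univ
    · subst hU_ne
      exact ⟨f, hf, fun _ _ ↦ rfl⟩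
    obtain ⟨f₁, U₁, hU₁, hf₁, hf₁_eq⟩ := hf.exists_ssuperset hG hU hU_ne
    obtain ⟨f₂, hf₂, hf₂_eq⟩ := ih U₁ hU₁ hf₁ (hU.mono hU₁.subset)
    refine ⟨f₂, hf₂, fun e he ↦ ?_⟩
    rw [hf₂_eq e, hf₁_eq e he]
    simp only [mem_edgesWithin, mem_compl] at he ⊢
    exact fun h ↦ he ⟨fun h' ↦ h.1 (hU₁.subset h'), fun h' ↦ h.2 (hU₁.subset h')⟩

lemma IsCompletable.exists_isNZFlow (hf : G.IsCompletable ∅ f univ) :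
    ∃ θ : E → ZMod 2 × Klein, G.IsNZFlow θ ∧ ∀ e, (θ e).1 = f e := by
  obtain ⟨g, -, hg_boundary, hg_ne⟩ := hf.exists_completion 0 (by simp) (by simp)
  let θ : E → ZMod 2 × Klein := fun e ↦ (f e, g e)
  have h_fst (v) : (G.boundary θ v).1 = 0 :=
    (G.boundary_comp (AddMonoidHom.fst (ZMod 2) Klein) θ v).symm.trans
      (congrFun hf.boundary_eq_zero v)
  have h_snd (v) : (G.boundary θ v).2 = 0 :=
    (G.boundary_comp (AddMonoidHom.snd (ZMod 2) Klein) θ v).symm.trans (hg_boundary v (mem_univ v))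
  refine ⟨θ, ⟨funext fun v ↦ Prod.ext (h_fst v) (h_snd v), fun e he ↦ ?_⟩, fun _ ↦ rfl⟩
  exact hg_ne e (by simp [mem_edgesWithin]) (congrArg Prod.fst he) (congrArg Prod.snd he)

lemma IsEdgeConnected.exists_isNZFlow (hG : G.IsEdgeConnected 3) :
    ∃ θ : E → ZMod 2 × Klein, G.IsNZFlow θ := by
  rcases isEmpty_or_nonempty V with hV | ⟨⟨v⟩⟩
  · exact ⟨0, map_zero _, fun e ↦ (hV.false (G.src e)).elim⟩
  obtain ⟨f, hf, -⟩ := (isCompletable_singleton v).exists_univ hG (singleton_nonempty v)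
  obtain ⟨θ, hθ, -⟩ := hf.exists_isNZFlow
  exact ⟨θ, hθ⟩

end EdgeConnected

section Poor

variable [Fintype V] [Fintype E] [DecidableEq V] {G : OrientedMultigraph V E} {u w : V}

lemma IsEdgeConnected.edgesBetween_singleton_nonempty (hG : G.IsEdgeConnected 3) (huw : u ≠ w)
    (hu : #(G.cut {u}) = 3) {L : Finset V} (hL : L.Nonempty) (huL : u ∉ L) (hwL : w ∉ L)
    (hL_card : #(G.edgesBetween L ({u, w}ᶜ \ L)) ≤ 1) : (G.edgesBetween {w} L).Nonempty := by
  have h_disj_u : Disjoint L {u} := disjoint_singleton_right.mpr huL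
  have h_disj_w : Disjoint L {w} := disjoint_singleton_right.mpr hwL
  have h_disj : Disjoint L {u, w} := by simp [huL, hwL]
  have h_cut := hG L hL fun h ↦ huL (h ▸ mem_univ u)
  have h_cut_union := hG (L ∪ {u}) ⟨u, by simp⟩ fun h ↦ by
    have := h ▸ mem_univ w
    simp [hwL, huw.symm] at this
  have h_union := card_cut_union_add (G := G) h_disj_u
  have h_split := card_edgesBetween_union (G := G) h_disj_u h_disj_w (disjoint_singleton.mpr huw)
  rw [singleton_union] at h_split
  have h_cut_eq := card_cut_eq_add (G := G) h_disj
  rw [edgesBetween_comm, ← card_pos]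
  omega

/-- Starting from the even subgraph without edges on `{u, w}` makes all values around `u` and `w`
lie in the Klein four-group. -/
lemma IsEdgeConnected.exists_isCompletable_zero_on_cuts (hG : G.IsEdgeConnected 3) (huw : u ≠ w)
    (hu : #(G.cut {u}) = 3) (hw : #(G.cut {w}) = 3) (h_edge : #(G.edgesBetween {u} {w}) = 1) :
    ∃ U f, {u, w} ⊆ U ∧ G.IsCompletable ∅ f U ∧
      ∀ e, e ∈ G.cut {u} ∨ e ∈ G.cut {w} → f e = 0 := by
  have h_nonempty : ({u, w} : Finset V)ᶜ.Nonempty := by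
    rw [nonempty_iff_ne_empty]
    intro h_empty
    have h_cut := card_cut_eq_add (G := G) (disjoint_singleton.mpr huw)
    have h_rest : ({w}ᶜ \ {u} : Finset V) = ∅ := by
      rw [← h_empty]
      grind [mem_compl]
    simp only [h_rest, edgesBetween, notMem_empty, and_false, false_and, or_self, filter_false,
      card_empty] at h_cut h_edge
    omega
  obtain ⟨L, hLU, hL, hL_card, hL_cut⟩ := exists_subset_forall_two_le_card (G := G) h_nonempty
  have hUL : Disjoint {u, w} L := disjoint_of_subset_right hLU disjoint_compl_right
  obtain ⟨huL, hwL⟩ : u ∉ L ∧ w ∉ L := by simpa using hUL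
  obtain ⟨q, hq⟩ := hG.edgesBetween_singleton_nonempty huw hu hL huL hwL hL_card
  obtain ⟨p, hp⟩ := hG.edgesBetween_singleton_nonempty huw.symm hw hL hwL huL
    (by rwa [pair_comm])
  have hpu : p ∈ G.cut {u} := by
    rw [edgesBetween_comm] at hp
    exact edgesBetween_subset_cut (disjoint_singleton_right.mpr huL) hp
  have hqu : q ∉ G.cut {u} := by
    simp only [mem_edgesBetween, mem_cut, mem_singleton] at hq ⊢
    grind
  have h_mono {e z} (hz : z ∈ ({u, w} : Finset V)) (he : e ∈ G.edgesBetween {z} L) :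
      e ∈ G.edgesBetween {u, w} L := by
    simp only [mem_edgesBetween, mem_singleton] at he ⊢
    grind
  obtain ⟨W, hWL, -, ⟨f, hf⟩, hpW, hqW⟩ := exists_isCompletable_edgesBetween hL_cut
    (h_mono (by simp) hp) (h_mono (by simp) hq)
  obtain ⟨e₀, he₀⟩ := card_eq_one.mp h_edge
  refine ⟨{u, w} ∪ W, 0 + f, subset_union_left,
    (isCompletable_pair huw he₀).union_of_two_edges hf (disjoint_of_subset_right hWL hUL)
      (ne_of_mem_of_not_mem hpu hqu) hpW hqW subset_rfl fun _ ↦ ⟨hpu, hqu⟩, fun e he ↦ ?_⟩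
  rw [zero_add]
  refine hf.support e ?_
  simp only [mem_cut, mem_edgesWithin, mem_singleton] at he ⊢
  grind

lemma IsEdgeConnected.exists_isNZFlow_image_cut_subset (hG : G.IsEdgeConnected 3) (huw : u ≠ w)
    (hu : #(G.cut {u}) = 3) (hw : #(G.cut {w}) = 3) (h_edge : #(G.edgesBetween {u} {w}) = 1) :
    ∃ θ : E → ZMod 2 × Klein, G.IsNZFlow θ ∧ θ '' G.cut {u} ⊆ θ '' G.cut {w} := by
  obtain ⟨U, f, huwU, hf, hf_zero⟩ := hG.exists_isCompletable_zero_on_cuts huw hu hw h_edge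
  obtain ⟨huU, hwU⟩ : u ∈ U ∧ w ∈ U := by simpa [insert_subset_iff] using huwU
  obtain ⟨f', hf', hf'_eq⟩ := hf.exists_univ hG ⟨u, huU⟩
  obtain ⟨θ, hθ, hθ_fst⟩ := hf'.exists_isNZFlow
  refine ⟨θ, hθ, hθ.image_cut_subset_of_fst_eq_zero hw fun e he ↦ ?_⟩
  rw [hθ_fst, hf'_eq e, hf_zero e he]
  simp only [mem_cut, mem_edgesWithin, mem_singleton, mem_compl] at he ⊢
  grind

end Poor

section Contraction

variable [DecidableEq V] (G : OrientedMultigraph V E) {x y z : V}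

/-- The map fixing all vertices but `y`, which is sent to `x`. -/
def collapse (hxy : x ≠ y) (v : V) : {v : V // v ≠ y} :=
  if hv : v = y then ⟨x, hxy⟩ else ⟨v, hv⟩

/-- The multigraph obtained by identifying `y` with `x`. The edges joining them are kept, as
loops. -/
def contract (hxy : x ≠ y) : OrientedMultigraph {v : V // v ≠ y} E where
  src e := collapse hxy (G.src e)
  tgt e := collapse hxy (G.tgt e)

lemma collapse_eq_iff (hxy : x ≠ y) (hzx : z ≠ x) (hzy : z ≠ y) {v : V} :
    collapse hxy v = ⟨z, hzy⟩ ↔ v = z := by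
  grind [collapse]

variable [Fintype E]

lemma cut_contract_singleton (hxy : x ≠ y) (hzx : z ≠ x) (hzy : z ≠ y) :
    (G.contract hxy).cut {⟨z, hzy⟩} = G.cut {z} := by
  simp only [cut, contract, mem_singleton, collapse_eq_iff hxy hzx hzy]

lemma edgesBetween_contract_singleton (hxy : x ≠ y) (hzx : z ≠ x) (hzy : z ≠ y) {v : V}
    (hvx : v ≠ x) (hvy : v ≠ y) :
    (G.contract hxy).edgesBetween {⟨z, hzy⟩} {⟨v, hvy⟩} = G.edgesBetween {z} {v} := by
  simp only [edgesBetween, contract, mem_singleton, collapse_eq_iff hxy hzx hzy,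
    collapse_eq_iff hxy hvx hvy]

lemma boundary_contract_apply [AddCommGroup A] (hxy : x ≠ y) (hzx : z ≠ x) (hzy : z ≠ y)
    (θ : E → A) : (G.contract hxy).boundary θ ⟨z, hzy⟩ = G.boundary θ z := by
  simp only [boundary_apply, contract, collapse_eq_iff hxy hzx hzy]

lemma cut_contract [Fintype V] (hxy : x ≠ y) (S : Finset {v : V // v ≠ y}) :
    (G.contract hxy).cut S = G.cut {v | collapse hxy v ∈ S} := by
  ext e
  simp [mem_cut, contract]

lemma card_cut_contract_ne_one [Finite V] {G : OrientedMultigraph V E} (h_one : ∀ T, #(G.cut T) ≠ 1)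
    (hxy : x ≠ y) (T : Finset {v : V // v ≠ y}) : #((G.contract hxy).cut T) ≠ 1 := by
  cases nonempty_fintype V
  rw [cut_contract]
  exact h_one _

end Contraction

section TwoCuts

variable [Fintype E] [DecidableEq V] {G : OrientedMultigraph V E} {S : Finset V} {u w x y : V}

lemma boundary_eq_zero_of_sum_cut_eq_zero [Finite V] [AddCommGroup A] [Module (ZMod 2) A]
    {θ : E → A} (hx : x ∈ S) (hy : y ∉ S) (hθ : ∀ v, v ≠ x → v ≠ y → G.boundary θ v = 0)
    (h_sum : ∑ e ∈ G.cut S, θ e = 0) : G.boundary θ = 0 := by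
  cases nonempty_fintype V
  have hx_zero : G.boundary θ x = 0 := by
    rwa [← sum_boundary_eq_sum_cut, sum_eq_single_of_mem x hx fun v hv hvx ↦
      hθ v hvx (ne_of_mem_of_not_mem hv hy)] at h_sum
  have hy_zero : G.boundary θ y = 0 := by
    have h_univ : ∑ v, G.boundary θ v = 0 := sum_boundary_eq_zero (by simp)
    rwa [sum_eq_single_of_mem y (mem_univ y) fun v _ hvy ↦ ?_] at h_univ
    by_cases hvx : v = x
    · rwa [hvx]
    · exact hθ v hvx hvy
  funext v
  by_cases hvx : v = x
  · rwa [hvx]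
  by_cases hvy : v = y
  · rwa [hvy]
  exact hθ v hvx hvy

lemma notMem_edgesBetween_of_mem_cut_singleton {e : E} (he : e ∈ G.cut {u}) (hux : u ≠ x)
    (huy : u ≠ y) : e ∉ G.edgesBetween {x} {y} := by
  simp only [mem_edgesBetween, mem_cut, mem_singleton] at he ⊢
  grind

/-- If both edges of a two-edge cut are incident with `u`, the third edge at `u` is a bridge. -/
lemma not_cut_subset_cut_singleton [Finite V] (h_one : ∀ T, #(G.cut T) ≠ 1)
    (hu : #(G.cut {u}) = 3) (hS : #(G.cut S) = 2) : ¬ G.cut S ⊆ G.cut {u} := by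
  classical
  cases nonempty_fintype V
  intro h_subset
  wlog huS : u ∈ S generalizing S
  · exact this (S := Sᶜ) (by rwa [cut_compl]) (by rwa [cut_compl]) (by simpa using huS)
  have h_between : G.edgesBetween (S.erase u) {u} = G.cut {u} \ G.cut S := by
    ext e
    have := @h_subset e
    simp only [mem_edgesBetween, mem_cut, mem_sdiff, mem_singleton, mem_erase] at this ⊢
    grind
  have h_union := card_cut_union_add (G := G) (disjoint_singleton_right.mpr (notMem_erase u S))
  rw [h_between, card_sdiff_of_subset h_subset, union_comm,
    singleton_union, insert_erase huS] at h_union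
  exact h_one (S.erase u) (by omega)

lemma exists_card_cut_of_not_isEdgeConnected [Fintype V] (h_one : ∀ T, #(G.cut T) ≠ 1)
    (hG : ¬ G.IsEdgeConnected 3) :
    ∃ S : Finset V, S.Nonempty ∧ S ≠ univ ∧ (G.cut S = ∅ ∨ #(G.cut S) = 2) := by
  simp only [IsEdgeConnected, not_forall, not_le] at hG
  obtain ⟨S, hS, hS_ne, hS_card⟩ := hG
  have := h_one S
  exact ⟨S, hS, hS_ne, by rw [← card_eq_zero]; omega⟩

end TwoCuts

section ContractiblePairs

variable [Fintype E] [DecidableEq E] [DecidableEq V] (G : OrientedMultigraph V E)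

/-- Either an empty cut separates `x` from `y`, or an edge of a two-edge cut joins them. In both
cases nowhere-zero flows with values in a group of exponent two lift along the contraction of `x`
and `y`. -/
def IsContractible (x y : V) : Prop :=
  ∃ S, x ∈ S ∧ y ∉ S ∧ (G.cut S = ∅ ∨ ∃ p ∈ G.edgesBetween {x} {y}, ∃ q ≠ p, G.cut S = {p, q})

variable {G} {S : Finset V} {u w x y : V}

lemma IsContractible.ne (h : G.IsContractible x y) : x ≠ y := by
  obtain ⟨S, hx, hy, -⟩ := h
  exact ne_of_mem_of_not_mem hx hy

lemma exists_isContractible_of_cut_eq_pair {p q : E} (hpq : q ≠ p) (hS : G.cut S = {p, q}) :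
    ∃ x y, G.IsContractible x y ∧ p ∈ G.edgesBetween {x} {y} := by
  obtain ⟨x, hx, y, hy, hp⟩ := exists_mem_edgesBetween_of_mem_cut (G := G) (S := S) (e := p)
    (by simp [hS])
  exact ⟨x, y, ⟨S, hx, hy, .inr ⟨p, hp, q, hpq, hS⟩⟩, hp⟩

lemma IsContractible.exists_isNZFlow [Finite V] [AddCommGroup A] [Module (ZMod 2) A]
    {θ : E → A} (h : G.IsContractible x y) (hθ : (G.contract h.ne).IsNZFlow θ) :
    ∃ θ' : E → A, G.IsNZFlow θ' ∧ ∀ e ∉ G.edgesBetween {x} {y}, θ' e = θ e := by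
  have h_boundary (v) (hvx : v ≠ x) (hvy : v ≠ y) : G.boundary θ v = 0 := by
    rw [← G.boundary_contract_apply h.ne hvx hvy, hθ.1, Pi.zero_apply]
  obtain ⟨S, hx, hy, hS | ⟨p, hp, q, hpq, hS⟩⟩ := h
  · exact ⟨θ, ⟨boundary_eq_zero_of_sum_cut_eq_zero hx hy h_boundary (by simp [hS]), hθ.2⟩,
      fun _ _ ↦ rfl⟩
  · refine ⟨Function.update θ p (θ q), ⟨boundary_eq_zero_of_sum_cut_eq_zero hx hy
      (fun v hvx hvy ↦ ?_) ?_, fun e ↦ ?_⟩, fun e he ↦ ?_⟩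
    · rw [← h_boundary v hvx hvy]
      refine boundary_apply_congr fun e he ↦ Function.update_of_ne ?_ _ _
      rintro rfl
      simp only [mem_edgesBetween, mem_singleton] at hp
      grind
    · rw [hS, sum_pair hpq.symm, Function.update_self, Function.update_of_ne hpq,
        ZModModule.add_self]
    · by_cases hep : e = p
      · simpa [hep] using hθ.2 q
      · simpa [hep] using hθ.2 e
    · exact Function.update_of_ne (ne_of_mem_of_not_mem hp he).symm _ _

lemma exists_isContractible [Fintype V] (h_one : ∀ T, #(G.cut T) ≠ 1)
    (hG : ¬ G.IsEdgeConnected 3) :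
    ∃ x y, G.IsContractible x y := by
  obtain ⟨S, ⟨x, hx⟩, hS_ne, hS | hS⟩ := exists_card_cut_of_not_isEdgeConnected h_one hG
  · obtain ⟨y, hy⟩ : ∃ y, y ∉ S := by simpa [eq_univ_iff_forall] using hS_ne
    exact ⟨x, y, S, hx, hy, .inl hS⟩
  · obtain ⟨p, q, hpq, hS⟩ := card_eq_two.mp hS
    obtain ⟨x, y, h, -⟩ := exists_isContractible_of_cut_eq_pair hpq.symm hS
    exact ⟨x, y, h⟩

end ContractiblePairs

theorem exists_isNZFlow_of_card_cut_ne_one [Finite V] [Fintype E] [DecidableEq V]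
    {G : OrientedMultigraph V E} (h_one : ∀ S, #(G.cut S) ≠ 1) :
    ∃ θ : E → ZMod 2 × Klein, G.IsNZFlow θ := by
  classical
  cases nonempty_fintype V
  induction h_card : Fintype.card V using Nat.strong_induction_on generalizing V with
  | _ n ih =>
    by_cases hG : G.IsEdgeConnected 3
    · exact hG.exists_isNZFlow
    obtain ⟨x, y, hxy⟩ := exists_isContractible h_one hG
    obtain ⟨θ, hθ⟩ := ih _ (h_card ▸ Fintype.card_subtype_lt (x := y) (by simp))
      (card_cut_contract_ne_one h_one hxy.ne) inferInstance rfl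
    obtain ⟨θ', hθ', -⟩ := hxy.exists_isNZFlow hθ
    exact ⟨θ', hθ'⟩

section PoorEdge

variable [Fintype E] [DecidableEq V] {G : OrientedMultigraph V E} {S : Finset V} {u w : V}

lemma IsNZFlow.exists_cut_singleton_eq [DecidableEq E] [AddCommGroup A] [Module (ZMod 2) A]
    {θ : E → A} (hθ : G.IsNZFlow θ) (hu : #(G.cut {u}) = 3) {p q : E} (hp : p ∈ G.cut {u})
    (hq : q ∈ G.cut {u}) (hpq : p ≠ q) :
    ∃ r, G.cut {u} = {p, q, r} ∧ θ r = θ p + θ q := by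
  have h_erase : #(((G.cut {u}).erase p).erase q) = 1 := by
    rw [card_erase_of_mem (by simp [hq, hpq.symm]), card_erase_of_mem hp, hu]
  obtain ⟨r, hr⟩ := card_eq_one.mp h_erase
  have hr_mem : r ∈ ((G.cut {u}).erase p).erase q := by simp [hr]
  obtain ⟨hrq, hrp, -⟩ : r ≠ q ∧ r ≠ p ∧ r ∈ G.cut {u} := by simpa using hr_mem
  have h_cut : G.cut {u} = {p, q, r} := by
    rw [← hr, insert_erase (by simp [hq, hpq.symm]), insert_erase hp]
  refine ⟨r, h_cut, ?_⟩
  have h_sum := sum_cut_eq_zero hθ.1 {u}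
  rw [h_cut, sum_insert (by simp [hpq, hrp.symm]), sum_pair hrq.symm, ← add_assoc] at h_sum
  rw [eq_comm, ← sub_eq_zero, ZModModule.sub_eq_add, h_sum]

lemma IsNZFlow.injOn_cut_singleton [AddCommGroup A] [Module (ZMod 2) A] {θ : E → A}
    (hθ : G.IsNZFlow θ) (hu : #(G.cut {u}) = 3) : Set.InjOn θ (G.cut {u}) := by
  classical
  intro p hp q hq hpq
  by_contra h_ne
  obtain ⟨r, -, hr⟩ := hθ.exists_cut_singleton_eq hu hp hq h_ne
  exact hθ.2 r (by rw [hr, hpq, ZModModule.add_self])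

/-- The two edges of a two-edge cut get equal values, so the stars of `u` and `w` share two, hence
all three, values. -/
lemma IsNZFlow.image_cut_subset_of_cut_eq_pair [DecidableEq E] [AddCommGroup A]
    [Module (ZMod 2) A] {θ : E → A} (hθ : G.IsNZFlow θ) (hu : #(G.cut {u}) = 3)
    (hw : #(G.cut {w}) = 3) {e p q : E} (heu : e ∈ G.cut {u}) (hew : e ∈ G.cut {w})
    (hp : p ∈ G.cut {u}) (hq : q ∈ G.cut {w}) (hep : e ≠ p) (heq : e ≠ q) (hpq : p ≠ q)
    (hS : G.cut S = {p, q}) : θ '' G.cut {u} ⊆ θ '' G.cut {w} := by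
  have h_eq : θ p = θ q := by
    have h_sum := sum_cut_eq_zero hθ.1 S
    rwa [hS, sum_pair hpq, ← ZModModule.sub_eq_add, sub_eq_zero] at h_sum
  obtain ⟨r, hu_eq, hr⟩ := hθ.exists_cut_singleton_eq hu heu hp hep
  obtain ⟨s, hw_eq, hs⟩ := hθ.exists_cut_singleton_eq hw hew hq heq
  simp [hu_eq, hw_eq, Set.image_insert_eq, hr, hs, h_eq]

lemma exists_isContractible_of_cut_eq_empty [Fintype V] [DecidableEq E] (hu : 1 < #(G.cut {u}))
    (h_edge : #(G.edgesBetween {u} {w}) = 1) (hS : S.Nonempty) (hS_ne : S ≠ univ)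
    (hS_cut : G.cut S = ∅) :
    ∃ x y, G.IsContractible x y ∧ u ≠ x ∧ u ≠ y ∧ w ≠ x ∧ w ≠ y := by
  wlog huS : u ∈ S generalizing S
  · exact this (S := Sᶜ) (by simpa [nonempty_iff_ne_empty] using hS_ne)
      (by simpa using hS.ne_empty) (by rwa [cut_compl]) (by simpa using huS)
  have h_closed {v e} (he : e ∈ G.edgesBetween {u} {v}) : v ∈ S := by
    have h_notMem : e ∉ G.cut S := by simp [hS_cut]
    simp only [mem_edgesBetween, mem_cut, mem_singleton] at he h_notMem
    grind
  obtain ⟨e, he⟩ := card_eq_one.mp h_edge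
  obtain ⟨a, ha, hae⟩ := exists_mem_ne hu e
  obtain ⟨u', hu', x, hx, hax⟩ := exists_mem_edgesBetween_of_mem_cut ha
  rw [mem_singleton] at hu' hx
  subst hu'
  have hwS : w ∈ S := h_closed (e := e) (by simp [he])
  have hwx : w ≠ x := by
    rintro rfl
    exact hae (by simpa [he] using hax)
  obtain ⟨y, hy⟩ : ∃ y, y ∉ S := by simpa [eq_univ_iff_forall] using hS_ne
  exact ⟨x, y, ⟨S, h_closed hax, hy, .inl hS_cut⟩, Ne.symm hx, ne_of_mem_of_not_mem huS hy, hwx,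
    ne_of_mem_of_not_mem hwS hy⟩

lemma exists_isContractible_of_notMem_cut [DecidableEq E] {p q : E} (hpq : q ≠ p)
    (hS : G.cut S = {p, q}) (hpu : p ∉ G.cut {u}) (hpw : p ∉ G.cut {w}) :
    ∃ x y, G.IsContractible x y ∧ u ≠ x ∧ u ≠ y ∧ w ≠ x ∧ w ≠ y := by
  obtain ⟨x, y, hxy, hp⟩ := exists_isContractible_of_cut_eq_pair hpq hS
  have h_ne {v} (hv : p ∉ G.cut {v}) : v ≠ x ∧ v ≠ y := by
    constructor <;> rintro rfl
    · exact hv (mem_cut_singleton_of_mem_edgesBetween hxy.ne hp)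
    · exact hv (mem_cut_singleton_of_mem_edgesBetween hxy.ne.symm (G.edgesBetween_comm _ _ ▸ hp))
  exact ⟨x, y, hxy, (h_ne hpu).1, (h_ne hpu).2, h_ne hpw⟩

lemma exists_isContractible_or_exists_cut_eq_pair [Fintype V] [DecidableEq E]
    (h_one : ∀ T, #(G.cut T) ≠ 1) (hG : ¬ G.IsEdgeConnected 3) (hu : #(G.cut {u}) = 3)
    (hw : #(G.cut {w}) = 3) (h_edge : #(G.edgesBetween {u} {w}) = 1) :
    (∃ x y, G.IsContractible x y ∧ u ≠ x ∧ u ≠ y ∧ w ≠ x ∧ w ≠ y) ∨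
      ∃ S p q, G.cut S = {p, q} ∧ p ∈ G.cut {u} \ G.cut {w} ∧ q ∈ G.cut {w} \ G.cut {u} := by
  obtain ⟨S, hS, hS_ne, hS_cut | hS_card⟩ := exists_card_cut_of_not_isEdgeConnected h_one hG
  · exact .inl (exists_isContractible_of_cut_eq_empty (by omega) h_edge hS hS_ne hS_cut)
  obtain ⟨p, q, hpq, hS_cut⟩ := card_eq_two.mp hS_card
  have hS_cut' : G.cut S = {q, p} := by rw [hS_cut, pair_comm]
  by_cases hp : p ∉ G.cut {u} ∧ p ∉ G.cut {w}
  · exact .inl (exists_isContractible_of_notMem_cut hpq.symm hS_cut hp.1 hp.2)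
  by_cases hq : q ∉ G.cut {u} ∧ q ∉ G.cut {w}
  · exact .inl (exists_isContractible_of_notMem_cut hpq hS_cut' hq.1 hq.2)
  have h_not_both {v} (hv : #(G.cut {v}) = 3) : ¬ (p ∈ G.cut {v} ∧ q ∈ G.cut {v}) := fun h ↦
    not_cut_subset_cut_singleton h_one hv hS_card (by simp [hS_cut, insert_subset_iff, h])
  have := h_not_both hu
  have := h_not_both hw
  simp only [mem_sdiff]
  by_cases hpu : p ∈ G.cut {u}
  · exact .inr ⟨S, p, q, hS_cut, by tauto, by tauto⟩
  · exact .inr ⟨S, q, p, hS_cut', by tauto, by tauto⟩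

end PoorEdge

theorem exists_isNZFlow_image_cut_subset [Finite V] [Fintype E] [DecidableEq V]
    {G : OrientedMultigraph V E} {u w : V} (h_one : ∀ S, #(G.cut S) ≠ 1) (huw : u ≠ w)
    (hu : #(G.cut {u}) = 3) (hw : #(G.cut {w}) = 3) (h_edge : #(G.edgesBetween {u} {w}) = 1) :
    ∃ θ : E → ZMod 2 × Klein, G.IsNZFlow θ ∧ θ '' G.cut {u} ⊆ θ '' G.cut {w} := by
  classical
  cases nonempty_fintype V
  induction h_card : Fintype.card V using Nat.strong_induction_on generalizing V with
  | _ n ih =>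
    by_cases hG : G.IsEdgeConnected 3
    · exact hG.exists_isNZFlow_image_cut_subset huw hu hw h_edge
    obtain ⟨x, y, hxy, hux, huy, hwx, hwy⟩ | ⟨S, p, q, hS, hp, hq⟩ :=
      exists_isContractible_or_exists_cut_eq_pair h_one hG hu hw h_edge
    · have hu_cut := G.cut_contract_singleton hxy.ne hux huy
      have hw_cut := G.cut_contract_singleton hxy.ne hwx hwy
      obtain ⟨θ, hθ, hθ_subset⟩ := ih _
        (h_card ▸ Fintype.card_subtype_lt (x := y) (by simp)) (G := G.contract hxy.ne)
        (card_cut_contract_ne_one h_one hxy.ne) (by simpa using huw) (hu_cut ▸ hu) (hw_cut ▸ hw)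
        (by rwa [G.edgesBetween_contract_singleton hxy.ne hux huy hwx hwy]) inferInstance rfl
      obtain ⟨θ', hθ', h_eq⟩ := hxy.exists_isNZFlow hθ
      have h_image {v} (hvx : v ≠ x) (hvy : v ≠ y) : θ' '' G.cut {v} = θ '' G.cut {v} :=
        Set.image_congr fun e he ↦
          h_eq e (notMem_edgesBetween_of_mem_cut_singleton he hvx hvy)
      rw [hu_cut, hw_cut, ← h_image hux huy, ← h_image hwx hwy] at hθ_subset
      exact ⟨θ', hθ', hθ_subset⟩
    · obtain ⟨θ, hθ⟩ := exists_isNZFlow_of_card_cut_ne_one h_one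
      obtain ⟨e, he⟩ := card_pos.mp (h_edge ▸ Nat.one_pos)
      have heu := mem_cut_singleton_of_mem_edgesBetween huw he
      have hew := mem_cut_singleton_of_mem_edgesBetween huw.symm (G.edgesBetween_comm _ _ ▸ he)
      rw [mem_sdiff] at hp hq
      exact ⟨θ, hθ, hθ.image_cut_subset_of_cut_eq_pair hu hw heu hew hp.1 hq.1
        (ne_of_mem_of_not_mem hew hp.2) (ne_of_mem_of_not_mem heu hq.2)
        (ne_of_mem_of_not_mem hp.1 hq.2) hS⟩

section OfSimpleGraph

/-- A simple graph as a multigraph on its edge set, every edge being oriented arbitrarily. -/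
noncomputable def ofSimpleGraph (G : SimpleGraph V) : OrientedMultigraph V G.edgeSet where
  src e := (Quot.out e.1).1
  tgt e := (Quot.out e.1).2

variable (G : SimpleGraph V) {u w : V}

lemma mk_src_tgt_ofSimpleGraph (e : G.edgeSet) :
    s((ofSimpleGraph G).src e, (ofSimpleGraph G).tgt e) = e :=
  Quot.out_eq e.1

lemma adj_src_tgt_ofSimpleGraph (e : G.edgeSet) :
    G.Adj ((ofSimpleGraph G).src e) ((ofSimpleGraph G).tgt e) := by
  rw [← mem_edgeSet, mk_src_tgt_ofSimpleGraph]
  exact e.2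

variable [Fintype G.edgeSet] [DecidableEq V]

lemma coe_image_cut_singleton_ofSimpleGraph (v : V) :
    Subtype.val '' ((ofSimpleGraph G).cut {v} : Set G.edgeSet) = G.incidenceSet v := by
  have h_mem (e : G.edgeSet) : e ∈ (ofSimpleGraph G).cut {v} ↔ v ∈ e.1 := by
    have h_ne := (adj_src_tgt_ofSimpleGraph G e).ne
    rw [← mk_src_tgt_ofSimpleGraph G e, Sym2.mem_iff, mem_cut, mem_singleton, mem_singleton]
    grind
  ext e
  simp [h_mem, incidenceSet, and_comm]

lemma card_cut_singleton_ofSimpleGraph (v : V) :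
    #((ofSimpleGraph G).cut {v}) = (G.neighborSet v).ncard := by
  rw [← Set.ncard_coe_finset, ← Set.ncard_image_of_injective _ Subtype.val_injective,
    coe_image_cut_singleton_ofSimpleGraph]
  exact Nat.card_congr (G.incidenceSetEquivNeighborSet v)

variable {G}

lemma card_edgesBetween_ofSimpleGraph (huw : G.Adj u w) :
    #((ofSimpleGraph G).edgesBetween {u} {w}) = 1 := by
  rw [card_eq_one]
  refine ⟨⟨s(u, w), huw⟩, ?_⟩
  ext e
  rw [mem_singleton, Subtype.ext_iff, ← mk_src_tgt_ofSimpleGraph G e, Sym2.eq_iff,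
    mem_edgesBetween]
  simp only [mem_singleton]

lemma mem_iff_mem_of_adj_of_notMem_cut {S : Finset V} (huw : G.Adj u w)
    (he : ⟨s(u, w), huw⟩ ∉ (ofSimpleGraph G).cut S) : u ∈ S ↔ w ∈ S := by
  have h_ends := mk_src_tgt_ofSimpleGraph G ⟨s(u, w), huw⟩
  rw [Sym2.eq_iff] at h_ends
  rw [mem_cut] at he
  grind

lemma card_cut_ofSimpleGraph_ne_one (hG : Bridgeless G) (S : Finset V) :
    #((ofSimpleGraph G).cut S) ≠ 1 := by
  intro h_card
  obtain ⟨e, he⟩ := card_eq_one.mp h_card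
  have h_closed {a b} (hab : (G.deleteEdges {e.1}).Reachable a b) : a ∈ S ↔ b ∈ S := by
    obtain ⟨walk⟩ := hab
    induction walk with
    | nil => rfl
    | cons h_adj _ ih =>
      rw [deleteEdges_adj] at h_adj
      rw [← ih]
      refine mem_iff_mem_of_adj_of_notMem_cut h_adj.1 ?_
      simpa [he, Subtype.ext_iff] using h_adj.2
  refine hG e.1 e.2 ?_
  rw [← mk_src_tgt_ofSimpleGraph G e, isBridge_iff, mk_src_tgt_ofSimpleGraph]
  intro h_reachable
  have h_iff := h_closed h_reachable
  have h_mem : e ∈ (ofSimpleGraph G).cut S := by simp [he]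
  rw [mem_cut] at h_mem
  tauto

variable {θ : G.edgeSet → A} {Θ : Sym2 V → A}

lemma colorSet_eq_image_cut (hΘ : ∀ e : G.edgeSet, Θ e = θ e) (v : V) :
    colorSet G Θ v = θ '' (ofSimpleGraph G).cut {v} := by
  rw [colorSet, ← coe_image_cut_singleton_ofSimpleGraph, Set.image_image]
  exact Set.image_congr fun e _ ↦ hΘ e

variable [AddCommGroup A] [Module (ZMod 2) A]

lemma IsNZFlow.isNowhereZeroFlow (hθ : (ofSimpleGraph G).IsNZFlow θ)
    (hΘ : ∀ e : G.edgeSet, Θ e = θ e) : IsNowhereZeroFlow G Θ := by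
  refine ⟨fun e he ↦ hΘ ⟨e, he⟩ ▸ hθ.2 ⟨e, he⟩, fun v ↦ ?_⟩
  rw [← coe_image_cut_singleton_ofSimpleGraph, finsum_mem_image Subtype.val_injective.injOn,
    finsum_mem_coe_finset, ← sum_cut_eq_zero hθ.1 {v}]
  exact sum_congr rfl fun e _ ↦ hΘ e

end OfSimpleGraph

end OrientedMultigraph

open OrientedMultigraph

theorem stmt_10_general {V : Type*} [Finite V] (G : SimpleGraph V) (hbl : Bridgeless G) (u w : V)
    (huw : G.Adj u w) (hu : (G.neighborSet u).ncard = 3) (hw : (G.neighborSet w).ncard = 3) :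
    ∃ θ : Sym2 V → ZMod 2 × ZMod 2 × ZMod 2,
      IsNowhereZeroFlow G θ ∧ IsPoorAt G θ u w := by
  classical
  have := Fintype.ofFinite G.edgeSet
  rw [← card_cut_singleton_ofSimpleGraph] at hu hw
  obtain ⟨θ, hθ, h_subset⟩ := exists_isNZFlow_image_cut_subset
    (card_cut_ofSimpleGraph_ne_one hbl) huw.ne hu hw (card_edgesBetween_ofSimpleGraph huw)
  have h_extend (e : G.edgeSet) : Function.extend Subtype.val θ 0 e.1 = θ e :=
    Subtype.val_injective.extend_apply θ 0 e
  refine ⟨Function.extend Subtype.val θ 0, hθ.isNowhereZeroFlow h_extend, ?_⟩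
  rw [IsPoorAt, colorSet_eq_image_cut h_extend, colorSet_eq_image_cut h_extend,
    Set.union_eq_self_of_subset_left h_subset, (hθ.injOn_cut_singleton hw).ncard_image,
    Set.ncard_coe_finset, hw]

theorem stmt_10 {V : Type*} [Fintype V] (G : SimpleGraph V)
    (hG : IsCubic G) (hbl : Bridgeless G) (u w : V) (huw : G.Adj u w) :
    ∃ θ : Sym2 V → ZMod 2 × ZMod 2 × ZMod 2,
      IsNowhereZeroFlow G θ ∧ IsPoorAt G θ u w :=
  stmt_10_general G hbl u w huw (hG u) (hG w)
end
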